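/- arXiv:2012.14342 — 3 statements merged into one kernel-verified Lean document; each statement's English description precedes it below -/
import Mathlib

section
/- For every integer d ≥ 2, every d×d Hermitian matrix H, and every d×d density matrix ρ, the Haar variance of the mean energy is ∫_{U(d)} (Tr[U ρ U† H] − Tr[H]/d)² dμ_Haar(U) = (1/(d²−1)) · (Tr[H²] − (Tr[H])²/d) · (Tr[ρ²] − 1/d). -/
open MeasureTheory Matrix
open scoped ComplexOrder

noncomputable instance unitaryGroup.measurableSpace (d : ℕ) :
    MeasurableSpace (Matrix.unitaryGroup (Fin d) ℂ) := borel _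

instance unitaryGroup.borelSpace (d : ℕ) :
    BorelSpace (Matrix.unitaryGroup (Fin d) ℂ) := ⟨rfl⟩

instance unitaryGroup.compactSpace (d : ℕ) :
    CompactSpace (Matrix.unitaryGroup (Fin d) ℂ) := by
  refine isCompact_iff_compactSpace.mp ?_
  have hK : IsCompact (Set.univ.pi fun _ : Fin d => Set.univ.pi fun _ : Fin d =>
      Metric.closedBall (0 : ℂ) 1) :=
    isCompact_univ_pi fun _ => isCompact_univ_pi fun _ => isCompact_closedBall _ _
  refine IsCompact.of_isClosed_subset hK ?_ ?_
  · exact isClosed_unitary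
  · intro U hU i _ j _
    simpa using entry_norm_bound_of_unitary hU i j

section HaarConjugation

variable {d : ℕ} (μ : Measure (Matrix.unitaryGroup (Fin d) ℂ)) [μ.IsHaarMeasure]
  (ρ : Matrix (Fin d) (Fin d) ℂ)

/-- The Haar average of a function of the conjugates `U ρ U†` is invariant under conjugation. -/
lemma integral_conj_unitary (V : Matrix.unitaryGroup (Fin d) ℂ)
    (F : Matrix (Fin d) (Fin d) ℂ → ℂ) :
    ∫ U : Matrix.unitaryGroup (Fin d) ℂ, F (V * (U * ρ * star (U : Matrix (Fin d) (Fin d) ℂ)) *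
        star (V : Matrix (Fin d) (Fin d) ℂ)) ∂μ
      = ∫ U : Matrix.unitaryGroup (Fin d) ℂ, F (U * ρ * star (U : Matrix (Fin d) (Fin d) ℂ)) ∂μ := by
  rw [← integral_mul_left_eq_self
    (fun U : Matrix.unitaryGroup (Fin d) ℂ => F (U * ρ * star (U : Matrix (Fin d) (Fin d) ℂ))) V]
  simp [Matrix.mul_assoc]

lemma permMatrix_mem_unitaryGroup (σ : Equiv.Perm (Fin d)) :
    σ.permMatrix ℂ ∈ Matrix.unitaryGroup (Fin d) ℂ := by
  rw [Matrix.mem_unitaryGroup_iff, star_eq_conjTranspose, conjTranspose_permMatrix,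
    ← permMatrix_mul]
  simp

lemma permMatrix_conj_apply (σ : Equiv.Perm (Fin d)) (X : Matrix (Fin d) (Fin d) ℂ)
    (i j : Fin d) :
    (σ.permMatrix ℂ * X * star (σ.permMatrix ℂ)) i j = X (σ i) (σ j) := by
  rw [star_eq_conjTranspose, conjTranspose_permMatrix, Equiv.Perm.permMatrix,
    Equiv.Perm.permMatrix, PEquiv.toMatrix_toPEquiv_mul, PEquiv.mul_toMatrix_toPEquiv]
  simp [Equiv.Perm.inv_def]

lemma integral_conj_diag_mul_diag_perm (σ : Equiv.Perm (Fin d)) (i j : Fin d) :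
    ∫ U : Matrix.unitaryGroup (Fin d) ℂ,
        (U * ρ * star (U : Matrix (Fin d) (Fin d) ℂ)) (σ i) (σ i) *
          (U * ρ * star (U : Matrix (Fin d) (Fin d) ℂ)) (σ j) (σ j) ∂μ
      = ∫ U : Matrix.unitaryGroup (Fin d) ℂ,
        (U * ρ * star (U : Matrix (Fin d) (Fin d) ℂ)) i i *
          (U * ρ * star (U : Matrix (Fin d) (Fin d) ℂ)) j j ∂μ := by
  have h := integral_conj_unitary μ ρ ⟨σ.permMatrix ℂ, permMatrix_mem_unitaryGroup σ⟩
    (fun X => X i i * X j j)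
  simpa only [permMatrix_conj_apply] using h

lemma exists_perm_apply_pair {α : Type*} [DecidableEq α] {a b i j : α} (hab : a ≠ b)
    (hij : i ≠ j) : ∃ σ : Equiv.Perm α, σ a = i ∧ σ b = j := by
  refine ⟨Equiv.swap (Equiv.swap a i b) j * Equiv.swap a i, ?_, ?_⟩
  · have h : i ≠ Equiv.swap a i b := fun h => hab <| by
      simpa using (Equiv.swap a i).injective ((Equiv.swap_apply_left a i).trans h)
    simp [Equiv.swap_apply_of_ne_of_ne h hij]
  · simp

lemma integrable_conj {F : Matrix (Fin d) (Fin d) ℂ → ℂ} (hF : Continuous F) :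
    Integrable (fun U : Matrix.unitaryGroup (Fin d) ℂ =>
      F (U * ρ * star (U : Matrix (Fin d) (Fin d) ℂ))) μ := by
  refine Continuous.integrable_of_hasCompactSupport ?_ (HasCompactSupport.of_compactSpace _)
  fun_prop

/-- The second moment of `Tr[U ρ U† A]` for Hermitian `A` is a combination of `Tr[A²]` and
`Tr[A]²`. -/
lemma exists_integral_trace_conj_sq (hd : 2 ≤ d) :
    ∃ c q : ℂ, ∀ A : Matrix (Fin d) (Fin d) ℂ, A.IsHermitian →
      ∫ U : Matrix.unitaryGroup (Fin d) ℂ,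
        (U * ρ * star (U : Matrix (Fin d) (Fin d) ℂ) * A).trace ^ 2 ∂μ
      = c * (A * A).trace + q * A.trace ^ 2 := by
  let M : Fin d → Fin d → ℂ := fun i j => ∫ U : Matrix.unitaryGroup (Fin d) ℂ,
    (U * ρ * star (U : Matrix (Fin d) (Fin d) ℂ)) i i *
      (U * ρ * star (U : Matrix (Fin d) (Fin d) ℂ)) j j ∂μ
  let i₀ : Fin d := ⟨0, by omega⟩
  let i₁ : Fin d := ⟨1, by omega⟩
  have hne : i₀ ≠ i₁ := by simp [i₀, i₁]
  have hM : ∀ i j, M i j = M i₀ i₁ + if i = j then M i₀ i₀ - M i₀ i₁ else 0 := by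
    intro i j
    split_ifs with hij
    · subst hij
      rw [add_sub_cancel]
      simpa using integral_conj_diag_mul_diag_perm μ ρ (Equiv.swap i₀ i) i₀ i₀
    · obtain ⟨σ, rfl, rfl⟩ := exists_perm_apply_pair hne hij
      simpa using integral_conj_diag_mul_diag_perm μ ρ σ i₀ i₁
  have hdiag : ∀ a : Fin d → ℂ, ∫ U : Matrix.unitaryGroup (Fin d) ℂ,
      (U * ρ * star (U : Matrix (Fin d) (Fin d) ℂ) * diagonal a).trace ^ 2 ∂μ
      = (M i₀ i₀ - M i₀ i₁) * ∑ i, a i * a i + M i₀ i₁ * (∑ i, a i) ^ 2 := by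
    intro a
    have hexp : ∀ X : Matrix (Fin d) (Fin d) ℂ, (X * diagonal a).trace ^ 2
        = ∑ i, ∑ j, a i * a j * (X i i * X j j) := by
      intro X
      simp only [Matrix.trace, diag_apply, mul_diagonal, sq, Finset.sum_mul_sum]
      exact Finset.sum_congr rfl fun i _ => Finset.sum_congr rfl fun j _ => by ring
    have hint : ∀ i j, Integrable (fun U : Matrix.unitaryGroup (Fin d) ℂ => a i * a j *
        ((U * ρ * star (U : Matrix (Fin d) (Fin d) ℂ)) i i *
          (U * ρ * star (U : Matrix (Fin d) (Fin d) ℂ)) j j)) μ := fun i j =>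
      integrable_conj μ ρ (F := fun X => a i * a j * (X i i * X j j)) (by fun_prop)
    calc _ = ∑ i, ∑ j, a i * a j * M i j := by
          simp only [hexp]
          rw [integral_finsetSum _ fun i _ => integrable_finsetSum _ fun j _ => hint i j]
          refine Finset.sum_congr rfl fun i _ => ?_
          rw [integral_finsetSum _ fun j _ => hint i j]
          exact Finset.sum_congr rfl fun j _ => integral_const_mul _ _
      _ = _ := by
          simp only [fun i j => congrArg (a i * a j * ·) (hM i j), mul_add,
            Finset.sum_add_distrib, mul_ite, mul_zero, Finset.sum_ite_eq, Finset.mem_univ,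
            if_true, ← Finset.sum_mul, sq, Finset.sum_mul_sum]
          ring
  refine ⟨M i₀ i₀ - M i₀ i₁, M i₀ i₁, fun A hA => ?_⟩
  obtain ⟨V, a, rfl⟩ : ∃ (V : Matrix.unitaryGroup (Fin d) ℂ) (a : Fin d → ℂ),
      A = V * diagonal a * star (V : Matrix (Fin d) (Fin d) ℂ) :=
    ⟨hA.eigenvectorUnitary, _, hA.spectral_theorem⟩
  have hVV : star (V : Matrix (Fin d) (Fin d) ℂ) * V = 1 := Unitary.coe_star_mul_self V
  have hVD : ∀ D : Matrix (Fin d) (Fin d) ℂ,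
      (V * D * star (V : Matrix (Fin d) (Fin d) ℂ)).trace = D.trace := fun D => by
    rw [trace_mul_comm, ← Matrix.mul_assoc, hVV, Matrix.one_mul]
  have hsq : (V * diagonal a * star (V : Matrix (Fin d) (Fin d) ℂ)) *
      (V * diagonal a * star (V : Matrix (Fin d) (Fin d) ℂ))
      = V * (diagonal a * diagonal a) * star (V : Matrix (Fin d) (Fin d) ℂ) := by
    simp only [Matrix.mul_assoc]
    rw [← Matrix.mul_assoc (star _) (V : Matrix (Fin d) (Fin d) ℂ), hVV, Matrix.one_mul]
  rw [hsq, hVD, hVD, diagonal_mul_diagonal, trace_diagonal, trace_diagonal, ← hdiag a,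
    ← integral_conj_unitary μ ρ V (fun X =>
      (X * (V * diagonal a * star (V : Matrix (Fin d) (Fin d) ℂ))).trace ^ 2)]
  refine integral_congr_ae (.of_forall fun U => ?_)
  have hX : ∀ X D W W' : Matrix (Fin d) (Fin d) ℂ, W' * W = 1 →
      (W * X * W' * (W * D * W')).trace = (X * D).trace := fun X D W W' hW => by
    rw [Matrix.mul_assoc, ← Matrix.mul_assoc W', ← Matrix.mul_assoc W', hW, Matrix.one_mul,
      trace_mul_comm, Matrix.mul_assoc, ← Matrix.mul_assoc W', hW, Matrix.one_mul,
      trace_mul_comm]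
  simp only [hX _ _ _ _ hVV]

variable [IsProbabilityMeasure μ]

/-- The second moment of `Tr[U ρ U† A]` for a traceless Hermitian `A`. -/
lemma integral_trace_conj_sq_of_trace_eq_zero (hd : 2 ≤ d) (hρ : ρ.trace = 1)
    {A : Matrix (Fin d) (Fin d) ℂ} (hA : A.IsHermitian) (hA0 : A.trace = 0) :
    ∫ U : Matrix.unitaryGroup (Fin d) ℂ,
        (U * ρ * star (U : Matrix (Fin d) (Fin d) ℂ) * A).trace ^ 2 ∂μ
      = 1 / ((d : ℂ) ^ 2 - 1) * (A * A).trace * ((ρ * ρ).trace - 1 / d) := by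
  obtain ⟨c, q, h⟩ := exists_integral_trace_conj_sq μ ρ hd
  have hUU : ∀ U : Matrix.unitaryGroup (Fin d) ℂ,
      star (U : Matrix (Fin d) (Fin d) ℂ) * U = 1 := Unitary.coe_star_mul_self
  have htr : ∀ (U : Matrix.unitaryGroup (Fin d) ℂ) (B : Matrix (Fin d) (Fin d) ℂ),
      (U * B * star (U : Matrix (Fin d) (Fin d) ℂ)).trace = B.trace := fun U B => by
    rw [trace_mul_comm, ← Matrix.mul_assoc, hUU, Matrix.one_mul]
  have hone : 1 = c * d + q * d ^ 2 := by
    simpa [htr, hρ] using h 1 isHermitian_one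
  have hentry : ∀ i j, ∫ U : Matrix.unitaryGroup (Fin d) ℂ,
      (U * ρ * star (U : Matrix (Fin d) (Fin d) ℂ)) i j *
        (U * ρ * star (U : Matrix (Fin d) (Fin d) ℂ)) j i ∂μ
      = c + if i = j then q else 0 := by
    intro i j
    have h₁ := h (single i j 1 + single j i 1) (by
      simp [IsHermitian, add_comm])
    have h₂ := h (Complex.I • (single i j 1 - single j i 1)) (by
      simp [IsHermitian, conjTranspose_smul, ← smul_neg])
    have key : ∀ X : Matrix (Fin d) (Fin d) ℂ, X i j * X j i
        = 4⁻¹ * ((X * (single i j 1 + single j i 1)).trace ^ 2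
          + (X * (Complex.I • (single i j 1 - single j i 1))).trace ^ 2) := by
      intro X
      simp only [mul_add, mul_sub, Matrix.mul_smul, trace_smul, trace_add, trace_sub, smul_eq_mul,
        trace_mul_single, MulOpposite.op_one, one_smul]
      linear_combination -4⁻¹ * (X i j - X j i) ^ 2 * Complex.I_sq
    have hint : ∀ B : Matrix (Fin d) (Fin d) ℂ,
        Integrable (fun U : Matrix.unitaryGroup (Fin d) ℂ =>
          (U * ρ * star (U : Matrix (Fin d) (Fin d) ℂ) * B).trace ^ 2) μ := fun B =>
      integrable_conj μ ρ (F := fun X => (X * B).trace ^ 2) (by fun_prop)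
    simp only [key]
    rw [integral_const_mul, integral_add (hint _) (hint _), h₁, h₂]
    split_ifs with hij
    · subst hij
      simp [mul_add, add_mul]
      ring
    · have hji : j ≠ i := Ne.symm hij
      simp [mul_add, add_mul, mul_sub, sub_mul, hij, hji]
      ring
  have hpur : (ρ * ρ).trace = c * d ^ 2 + q * d := by
    have hsum : ∀ U : Matrix.unitaryGroup (Fin d) ℂ, (ρ * ρ).trace = ∑ i, ∑ j,
        (U * ρ * star (U : Matrix (Fin d) (Fin d) ℂ)) i j *
          (U * ρ * star (U : Matrix (Fin d) (Fin d) ℂ)) j i := by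
      intro U
      rw [← htr U (ρ * ρ)]
      have : (U * (ρ * ρ) * star (U : Matrix (Fin d) (Fin d) ℂ))
          = (U * ρ * star (U : Matrix (Fin d) (Fin d) ℂ)) *
            (U * ρ * star (U : Matrix (Fin d) (Fin d) ℂ)) := by
        simp only [Matrix.mul_assoc]
        rw [← Matrix.mul_assoc (star _) (U : Matrix (Fin d) (Fin d) ℂ), hUU, Matrix.one_mul]
      rw [this]
      exact Finset.sum_congr rfl fun i _ => Matrix.mul_apply
    have hint : ∀ i j, Integrable (fun U : Matrix.unitaryGroup (Fin d) ℂ =>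
        (U * ρ * star (U : Matrix (Fin d) (Fin d) ℂ)) i j *
          (U * ρ * star (U : Matrix (Fin d) (Fin d) ℂ)) j i) μ := fun i j =>
      integrable_conj μ ρ (F := fun X => X i j * X j i) (by fun_prop)
    calc (ρ * ρ).trace = ∫ _ : Matrix.unitaryGroup (Fin d) ℂ, (ρ * ρ).trace ∂μ := by simp
      _ = ∑ i : Fin d, ∑ j : Fin d, (c + if i = j then q else 0) := by
          rw [integral_congr_ae (.of_forall hsum),
            integral_finsetSum _ fun i _ => integrable_finsetSum _ fun j _ => hint i j]
          refine Finset.sum_congr rfl fun i _ => ?_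
          rw [integral_finsetSum _ fun j _ => hint i j]
          exact Finset.sum_congr rfl fun j _ => hentry i j
      _ = _ := by
          simp [Finset.sum_add_distrib]
          ring
  have hd0 : (d : ℂ) ≠ 0 := by exact_mod_cast (by omega : d ≠ 0)
  have hd1 : (d : ℂ) ^ 2 - 1 ≠ 0 := by
    rw [sub_ne_zero]
    exact_mod_cast (by nlinarith : d ^ 2 ≠ 1)
  rw [h A hA, hA0, hpur]
  field_simp
  linear_combination (A * A).trace * hone

end HaarConjugation

/-- For every integer `d ≥ 2`, every `d×d` Hermitian matrix `H`, and every
`d×d` density matrix `ρ`, the Haar variance of the mean energy is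
`∫ (Tr[U ρ U† H] − Tr[H]/d)² dμ = (1/(d²−1)) (Tr[H²] − Tr[H]²/d) (Tr[ρ²] − 1/d)`. -/
theorem haar_variance_mean_energy (d : ℕ) (hd : 2 ≤ d)
    (μ : Measure (Matrix.unitaryGroup (Fin d) ℂ))
    [μ.IsHaarMeasure] [IsProbabilityMeasure μ]
    (H ρ : Matrix (Fin d) (Fin d) ℂ) (hH : H.IsHermitian)
    (hρ : ρ.PosSemidef) (hρtr : ρ.trace = 1) :
    (∫ U : Matrix.unitaryGroup (Fin d) ℂ,
        (((U : Matrix (Fin d) (Fin d) ℂ) * ρ * star (U : Matrix (Fin d) (Fin d) ℂ) * H).trace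
          - H.trace / d) ^ 2 ∂μ)
      = (1 / ((d : ℂ) ^ 2 - 1)) * ((H * H).trace - H.trace ^ 2 / d)
          * ((ρ * ρ).trace - 1 / d) := by
  have hd0 : (d : ℂ) ≠ 0 := by exact_mod_cast (by omega : d ≠ 0)
  have hHtr : star H.trace = H.trace := by rw [← trace_conjTranspose, hH.eq]
  have hA : (H - (H.trace / d) • (1 : Matrix (Fin d) (Fin d) ℂ)).IsHermitian := by
    simp only [IsHermitian, conjTranspose_sub, conjTranspose_smul, conjTranspose_one, hH.eq,
      star_div₀, hHtr, star_natCast]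
  have hA0 : (H - (H.trace / d) • (1 : Matrix (Fin d) (Fin d) ℂ)).trace = 0 := by
    simp [trace_sub, trace_smul, hd0]
  have hAA : ((H - (H.trace / d) • (1 : Matrix (Fin d) (Fin d) ℂ)) *
      (H - (H.trace / d) • (1 : Matrix (Fin d) (Fin d) ℂ))).trace
      = (H * H).trace - H.trace ^ 2 / d := by
    simp [mul_sub, sub_mul, trace_sub, trace_smul]
    field_simp
    ring
  rw [← hAA, ← integral_trace_conj_sq_of_trace_eq_zero μ ρ hd hρtr hA hA0]
  refine integral_congr_ae (.of_forall fun U => ?_)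
  have htr : (U * ρ * star (U : Matrix (Fin d) (Fin d) ℂ)).trace = 1 := by
    rw [trace_mul_comm, ← Matrix.mul_assoc, Unitary.coe_star_mul_self, Matrix.one_mul, hρtr]
  simp [mul_sub, trace_sub, trace_smul, htr]
end

section
/- For all integers d, p ≥ 1, every d×d Hermitian matrix H, and every unit vector ψ ∈ ℂ^d, the p-th Haar moment of the mean energy of a pure state admits the exact formula ∫_{U(d)} (Tr[U |ψ⟩⟨ψ| U† H])^p dμ_Haar(U) = ((d−1)!/(p+d−1)!) · Σ_{τ ∈ S_p} H[τ], where the sum runs over all permutations τ of {1,…,p} and H[τ] := ∏_{j=1}^{c(τ)} Tr[H^{α_j}] with α_1,…,α_{c(τ)} the cycle lengths of τ. -/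
open MeasureTheory Matrix
open scoped ComplexOrder

/-- The multiset of cycle lengths of a permutation, **including** fixed points
(which count as cycles of length `1`). -/
noncomputable def cycleLengths {p : ℕ} (τ : Equiv.Perm (Fin p)) : Multiset ℕ :=
  τ.cycleType + Multiset.replicate (Finset.univ.filter fun x => τ x = x).card 1

/-- `Θ[τ] := ∏_{j=1}^{c(τ)} Tr[Θ^{α_j}]`, product over the cycle lengths of `τ`. -/
noncomputable def permTraceProd {d p : ℕ} (Θ : Matrix (Fin d) (Fin d) ℂ)
    (τ : Equiv.Perm (Fin p)) : ℂ :=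
  ((cycleLengths τ).map fun a => (Θ ^ a).trace).prod

open Equiv.Perm in
open scoped Classical in
/-- A product over the orbits of a permutation is a product over its cycle lengths. -/
theorem prod_orbits_eq_prod_cycleLengths {p : ℕ} {M : Type*} [CommMonoid M]
    (τ : Equiv.Perm (Fin p)) (F : ℕ → M) :
    ∏ q : Quotient (SameCycle.setoid τ),
        F (Finset.univ.filter fun x => Quotient.mk (SameCycle.setoid τ) x = q).card
      = ((cycleLengths τ).map F).prod := by
  have out_sameCycle (x : Fin p) :
      τ.SameCycle (Quotient.mk (SameCycle.setoid τ) x).out x :=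
    Quotient.exact (s := SameCycle.setoid τ) (Quotient.out_eq _)
  have mk_eq_iff (x : Fin p) (q : Quotient (SameCycle.setoid τ)) :
      Quotient.mk (SameCycle.setoid τ) x = q ↔ τ.SameCycle q.out x := by
    rw [Quotient.mk_eq_iff_out]
    exact sameCycle_comm
  rw [cycleLengths, Multiset.map_add, Multiset.prod_add, cycleType_def, Multiset.map_map,
    Multiset.map_replicate, Multiset.prod_replicate,
    ← Finset.prod_filter_mul_prod_filter_not Finset.univ
      (fun q : Quotient (SameCycle.setoid τ) => q.out ∈ τ.support)]
  congr 1
  · change _ = ∏ c ∈ τ.cycleFactorsFinset, F c.support.card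
    refine Finset.prod_bij (fun q _ => τ.cycleOf q.out) ?_ ?_ ?_ ?_
    · intro q hq
      exact cycleOf_mem_cycleFactorsFinset_iff.2 (Finset.mem_filter.1 hq).2
    · intro q hq r hr h
      rw [← Quotient.out_equiv_out]
      exact (sameCycle_iff_cycleOf_eq_of_mem_support (Finset.mem_filter.1 hq).2
        (Finset.mem_filter.1 hr).2).2 h
    · intro c hc
      obtain ⟨x, hx⟩ := IsCycle.nonempty_support (mem_cycleFactorsFinset_iff.mp hc).1
      have hxτ := mem_cycleFactorsFinset_support_le hc hx
      refine ⟨Quotient.mk _ x, ?_, ?_⟩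
      · simp only [Finset.mem_filter, Finset.mem_univ, true_and]
        exact (out_sameCycle x).mem_support_iff.2 hxτ
      · rw [(out_sameCycle x).cycleOf_eq]
        exact (cycle_is_cycleOf hx hc).symm
    · intro q hq
      congr 2
      ext x
      rw [mem_support_cycleOf_iff' (mem_support.1 (Finset.mem_filter.1 hq).2)]
      simp [mk_eq_iff]
  · rw [← Finset.prod_const]
    refine Finset.prod_bij (fun q _ => q.out) ?_ ?_ ?_ ?_
    · intro q hq
      simpa using hq
    · intro q _ r _ h
      exact Quotient.out_inj.1 h
    · intro x hx
      have hx' : τ x = x := by simpa using hx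
      have : (Quotient.mk (SameCycle.setoid τ) x).out = x :=
        ((out_sameCycle x).symm.eq_of_left hx').symm
      exact ⟨Quotient.mk _ x, by simp [this, hx'], this⟩
    · intro q hq
      have hq' : τ q.out = q.out := by simpa using hq
      congr 1
      rw [Finset.card_eq_one]
      refine ⟨q.out, ?_⟩
      ext x
      simp only [mk_eq_iff, Finset.mem_filter, Finset.mem_univ, true_and, Finset.mem_singleton]
      exact ⟨fun h => (h.eq_of_left hq').symm, fun h => h ▸ SameCycle.refl _ _⟩

open Equiv.Perm in
open scoped Classical in
/-- The sum of a monomial over the index functions invariant under a permutation is the product of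
the power sums over its cycle lengths. -/
theorem sum_invariant_eq_prod_powerSum {p d : ℕ} {R : Type*} [CommRing R]
    (τ : Equiv.Perm (Fin p)) (a : Fin d → R) :
    ∑ i : Fin p → Fin d, (if i ∘ τ = i then ∏ k, a (i k) else 0)
      = ((cycleLengths τ).map fun n => ∑ j, a j ^ n).prod := by
  rw [← prod_orbits_eq_prod_cycleLengths, Finset.prod_univ_sum, Fintype.piFinset_univ,
    ← Finset.sum_filter]
  symm
  refine Finset.sum_bij (fun f _ x => f (Quotient.mk _ x)) ?_ ?_ ?_ ?_
  · intro f _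
    simp only [Finset.mem_filter, Finset.mem_univ, true_and]
    ext x
    simp only [Function.comp_apply]
    congr 2
    exact Quotient.sound (s := SameCycle.setoid τ) (sameCycle_apply_left.2 (SameCycle.refl τ x))
  · intro f _ g _ h
    ext q
    induction q using Quotient.inductionOn with
    | h x => exact congrArg Fin.val (congrFun h x)
  · intro i hi
    have hi' : i ∘ τ = i := by simpa using hi
    have hz : ∀ (n : ℕ) x, i ((τ ^ n) x) = i x := by
      intro n
      induction n with
      | zero => simp
      | succ n ih =>
        intro x
        rw [pow_succ, Equiv.Perm.mul_apply, ih]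
        exact congrFun hi' x
    refine ⟨Quotient.lift (s := SameCycle.setoid τ) i ?_, Finset.mem_univ _, rfl⟩
    intro x y hxy
    obtain ⟨n, hn⟩ := (show τ.SameCycle x y from hxy).exists_nat_pow_eq
    rw [← hn, hz]
  · intro f _
    rw [← Finset.prod_fiberwise Finset.univ (fun x => Quotient.mk (SameCycle.setoid τ) x)]
    refine Finset.prod_congr rfl fun q _ => ?_
    symm
    apply Finset.prod_eq_pow_card
    intro x hx
    exact congrArg (fun q => a (f q)) (Finset.mem_filter.1 hx).2

/-- Index functions weighted by the factorials of their multiplicities sum to the cycle index: the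
weight of an index function is the number of permutations that leave it invariant. -/
theorem sum_prod_mul_prod_factorial {p d : ℕ} {R : Type*} [CommRing R] (a : Fin d → R) :
    ∑ i : Fin p → Fin d, (∏ k, a (i k)) *
        ∏ j, ((Finset.univ.filter fun k => i k = j).card.factorial : R)
      = ∑ τ : Equiv.Perm (Fin p), ((cycleLengths τ).map fun n => ∑ j, a j ^ n).prod := by
  classical
  simp_rw [← sum_invariant_eq_prod_powerSum]
  rw [Finset.sum_comm]
  refine Finset.sum_congr rfl fun i _ => ?_
  rw [← Finset.sum_filter, Finset.sum_const, nsmul_eq_mul, mul_comm]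
  congr 1
  have h := DomMulAct.stabilizer_card i
  simp only [Fintype.card_subtype] at h
  rw [h]
  push_cast
  rfl

/-- The factorial-weighted number of index functions is a rising factorial. -/
theorem sum_prod_factorial_mul_factorial (p d : ℕ) :
    (∑ i : Fin p → Fin (d + 1),
        ∏ j, (Finset.univ.filter fun k => i k = j).card.factorial) * d.factorial
      = (p + d).factorial := by
  induction p with
  | zero => simp
  | succ p ih =>
    have step (a : Fin (d + 1)) (i : Fin p → Fin (d + 1)) :
        ∏ j, (Finset.univ.filter fun k => (Fin.cons a i : Fin (p + 1) → Fin (d + 1)) k = j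
            ).card.factorial
          = ((Finset.univ.filter fun k => i k = a).card + 1) *
            ∏ j, (Finset.univ.filter fun k => i k = j).card.factorial := by
      have card_cons (j : Fin (d + 1)) :
          (Finset.univ.filter fun k => (Fin.cons a i : Fin (p + 1) → Fin (d + 1)) k = j).card
            = (if a = j then 1 else 0) + (Finset.univ.filter fun k => i k = j).card := by
        simp only [Finset.card_filter, Fin.sum_univ_succ, Fin.cons_zero, Fin.cons_succ]
      rw [← Finset.mul_prod_erase _ _ (Finset.mem_univ a),
        ← Finset.mul_prod_erase Finset.univ
          (fun j => (Finset.univ.filter fun k => i k = j).card.factorial) (Finset.mem_univ a),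
        card_cons, if_pos rfl, add_comm 1, Nat.factorial_succ, mul_assoc]
      congr 2
      refine Finset.prod_congr rfl fun j hj => ?_
      rw [card_cons, if_neg (Finset.ne_of_mem_erase hj).symm, zero_add]
    have card_sum (i : Fin p → Fin (d + 1)) :
        ∑ a, ((Finset.univ.filter fun k => i k = a).card + 1) = p + 1 + d := by
      rw [Finset.sum_add_distrib,
        ← Finset.card_eq_sum_card_fiberwise (f := i) (s := Finset.univ) (t := Finset.univ)
          (fun _ _ => by simp)]
      simp
      ring
    rw [← (Fin.consEquiv fun _ => Fin (d + 1)).sum_comp, Fintype.sum_prod_type_right]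
    simp only [Fin.consEquiv_apply, step, ← Finset.sum_mul, card_sum]
    rw [← Finset.mul_sum, mul_assoc, ih, add_right_comm, Nat.factorial_succ]

/-- The diagonal Hermitian form with real coefficients `a`. -/
noncomputable def diagForm {d : ℕ} (a : Fin d → ℝ) (z : Fin d → ℂ) : ℝ :=
  ∑ j, a j * ‖z j‖ ^ 2

theorem continuous_diagForm {d : ℕ} (a : Fin d → ℝ) : Continuous (diagForm a) := by
  unfold diagForm
  fun_prop

/-- The even absolute moments of the standard complex Gaussian weight. -/
theorem integral_norm_pow_mul_exp (n : ℕ) :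
    ∫ z : ℂ, (‖z‖ ^ 2) ^ n * Real.exp (-‖z‖ ^ 2) = Real.pi * n.factorial := by
  have h := Complex.integral_rpow_mul_exp_neg_rpow (p := 2) (q := (2 * n : ℕ)) (by norm_num)
    (by have : (0 : ℝ) ≤ ((2 * n : ℕ) : ℝ) := by positivity
        linarith)
  simp only [Real.rpow_natCast, Real.rpow_ofNat, pow_mul] at h
  rw [h]
  push_cast
  rw [show (2 * (n : ℝ) + 2) / 2 = n + 1 by ring, Real.Gamma_nat_eq_factorial]
  ring

theorem integrable_norm_pow_mul_exp (n : ℕ) :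
    Integrable fun z : ℂ => (‖z‖ ^ 2) ^ n * Real.exp (-‖z‖ ^ 2) := by
  refine Integrable.of_integral_ne_zero ?_
  rw [integral_norm_pow_mul_exp]
  positivity

/-- `diagForm` powers times the Gaussian weight as a sum of products. -/
theorem diagForm_pow_mul_exp {d : ℕ} (p : ℕ) (a : Fin d → ℝ) (z : Fin d → ℂ) :
    diagForm a z ^ p * Real.exp (-diagForm 1 z)
      = ∑ i : Fin p → Fin d, (∏ k, a (i k)) *
          ∏ j, ((‖z j‖ ^ 2) ^ (Finset.univ.filter fun k => i k = j).card *
            Real.exp (-‖z j‖ ^ 2)) := by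
  simp only [diagForm, Pi.one_apply, one_mul, Finset.sum_pow', Fintype.piFinset_univ,
    Finset.sum_mul]
  refine Finset.sum_congr rfl fun i _ => ?_
  rw [Finset.prod_mul_distrib, Finset.prod_mul_distrib, ← Finset.sum_neg_distrib, Real.exp_sum,
    mul_assoc, ← Finset.prod_fiberwise Finset.univ i fun k => ‖z (i k)‖ ^ 2]
  have fiber (j : Fin d) : ∏ k with i k = j, ‖z (i k)‖ ^ 2
      = (‖z j‖ ^ 2) ^ (Finset.univ.filter fun k => i k = j).card :=
    Finset.prod_eq_pow_card fun k hk => by rw [(Finset.mem_filter.1 hk).2]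
  simp only [fiber]

theorem integrable_diagForm_pow_mul_exp {d : ℕ} (p : ℕ) (a : Fin d → ℝ) :
    Integrable fun z : Fin d → ℂ => diagForm a z ^ p * Real.exp (-diagForm 1 z) := by
  simp only [diagForm_pow_mul_exp]
  refine integrable_finsetSum _ fun i _ => Integrable.const_mul ?_ _
  exact Integrable.fintype_prod (f := fun (j : Fin d) (w : ℂ) =>
    (‖w‖ ^ 2) ^ (Finset.univ.filter fun k => i k = j).card * Real.exp (-‖w‖ ^ 2))
    fun j => integrable_norm_pow_mul_exp _

theorem integral_diagForm_pow_mul_exp {d : ℕ} (p : ℕ) (a : Fin d → ℝ) :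
    ∫ z : Fin d → ℂ, diagForm a z ^ p * Real.exp (-diagForm 1 z)
      = Real.pi ^ d * ∑ i : Fin p → Fin d, (∏ k, a (i k)) *
          ∏ j, ((Finset.univ.filter fun k => i k = j).card.factorial : ℝ) := by
  simp only [diagForm_pow_mul_exp]
  rw [integral_finsetSum, Finset.mul_sum]
  · refine Finset.sum_congr rfl fun i _ => ?_
    rw [integral_const_mul, integral_fintype_prod_volume_eq_prod (fun (j : Fin d) (w : ℂ) =>
      (‖w‖ ^ 2) ^ (Finset.univ.filter fun k => i k = j).card * Real.exp (-‖w‖ ^ 2))]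
    simp only [integral_norm_pow_mul_exp, Finset.prod_mul_distrib, Finset.prod_const,
      Finset.card_univ, Fintype.card_fin]
    ring
  · intro i _
    refine Integrable.const_mul ?_ _
    exact Integrable.fintype_prod (f := fun (j : Fin d) (w : ℂ) =>
      (‖w‖ ^ 2) ^ (Finset.univ.filter fun k => i k = j).card * Real.exp (-‖w‖ ^ 2))
      fun j => integrable_norm_pow_mul_exp _

theorem diagForm_one_mulVec {d : ℕ} (U : unitaryGroup (Fin d) ℂ) (z : Fin d → ℂ) :
    diagForm 1 ((U : Matrix (Fin d) (Fin d) ℂ) *ᵥ z) = diagForm 1 z := by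
  have key (w : Fin d → ℂ) : (diagForm 1 w : ℂ) = star w ⬝ᵥ w := by
    simp [diagForm, dotProduct, Complex.conj_mul']
  apply Complex.ofReal_injective
  rw [key, key, star_mulVec, dotProduct_mulVec, vecMul_vecMul, ← star_eq_conjTranspose,
    UnitaryGroup.star_mul_self, vecMul_one]

theorem exists_unitary_mulVec_single {d : ℕ} (hd : 0 < d) (ψ : Fin d → ℂ)
    (hψ : diagForm 1 ψ = 1) :
    ∃ W : unitaryGroup (Fin d) ℂ,
      (W : Matrix (Fin d) (Fin d) ℂ) *ᵥ Pi.single ⟨0, hd⟩ 1 = ψ := by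
  have hv : Orthonormal ℂ (Set.domRestrict {(⟨0, hd⟩ : Fin d)}
      fun _ => (WithLp.toLp 2 ψ : EuclideanSpace ℂ (Fin d))) := by
    rw [orthonormal_iff_ite]
    intro i j
    rw [if_pos (Subsingleton.elim i j)]
    have : ‖(WithLp.toLp 2 ψ : EuclideanSpace ℂ (Fin d))‖ = 1 := by
      rw [EuclideanSpace.norm_eq]
      simpa [diagForm] using hψ
    simp [Set.domRestrict, inner_self_eq_norm_sq_to_K, this]
  obtain ⟨b, hb⟩ := hv.exists_orthonormalBasis_extension_of_card_eq (by simp)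
  refine ⟨⟨(EuclideanSpace.basisFun (Fin d) ℂ).toBasis.toMatrix b,
    (EuclideanSpace.basisFun (Fin d) ℂ).toMatrix_orthonormalBasis_mem_unitary b⟩, ?_⟩
  ext i
  simp [hb, Module.Basis.toMatrix_apply]

theorem diagForm_smul {d : ℕ} (a : Fin d → ℝ) (c : ℂ) (z : Fin d → ℂ) :
    diagForm a (c • z) = ‖c‖ ^ 2 * diagForm a z := by
  simp only [diagForm, Finset.mul_sum, Pi.smul_apply, smul_eq_mul, norm_mul, mul_pow]
  exact Finset.sum_congr rfl fun j _ => by ring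

theorem diagForm_one_nonneg {d : ℕ} (z : Fin d → ℂ) : 0 ≤ diagForm 1 z :=
  Finset.sum_nonneg fun j _ => by simp only [Pi.one_apply]; positivity

theorem norm_sq_apply_le_diagForm_one {d : ℕ} (z : Fin d → ℂ) (j : Fin d) :
    ‖z j‖ ^ 2 ≤ diagForm 1 z := by
  simp only [diagForm, Pi.one_apply, one_mul]
  exact Finset.single_le_sum (f := fun j => ‖z j‖ ^ 2) (fun j _ => by positivity)
    (Finset.mem_univ j)

theorem abs_diagForm_le {d : ℕ} (a : Fin d → ℝ) (z : Fin d → ℂ) :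
    |diagForm a z| ≤ (∑ j, |a j|) * diagForm 1 z := by
  rw [Finset.sum_mul]
  refine (Finset.abs_sum_le_sum_abs _ _).trans (Finset.sum_le_sum fun j _ => ?_)
  rw [abs_mul, abs_of_nonneg (sq_nonneg ‖z j‖)]
  exact mul_le_mul_of_nonneg_left (norm_sq_apply_le_diagForm_one z j) (abs_nonneg _)

/-- The unitary group acts transitively on unit vectors; by scaling, every vector is a multiple of
an element of the orbit of a given unit vector. -/
theorem exists_unitary_smul_mulVec_eq {d : ℕ} (hd : 0 < d) (ψ z : Fin d → ℂ)
    (hψ : diagForm 1 ψ = 1) :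
    ∃ V : unitaryGroup (Fin d) ℂ,
      z = (Real.sqrt (diagForm 1 z) : ℂ) • ((V : Matrix (Fin d) (Fin d) ℂ) *ᵥ ψ) := by
  rcases (diagForm_one_nonneg z).eq_or_lt with hz | hz
  · refine ⟨1, ?_⟩
    rw [← hz, Real.sqrt_zero, Complex.ofReal_zero, zero_smul]
    ext j
    have := norm_sq_apply_le_diagForm_one z j
    rw [← hz] at this
    simpa using le_antisymm this (sq_nonneg _)
  · have hs : (Real.sqrt (diagForm 1 z) : ℂ) ≠ 0 := by
      simpa using (Real.sqrt_pos.2 hz).ne'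
    obtain ⟨W, hW⟩ := exists_unitary_mulVec_single hd ψ hψ
    obtain ⟨X, hX⟩ := exists_unitary_mulVec_single hd ((Real.sqrt (diagForm 1 z) : ℂ)⁻¹ • z) (by
      rw [diagForm_smul, norm_inv, Complex.norm_real, Real.norm_of_nonneg (Real.sqrt_nonneg _),
        inv_pow, Real.sq_sqrt hz.le, inv_mul_cancel₀ hz.ne'])
    refine ⟨X * W⁻¹, ?_⟩
    have hWψ : ((W⁻¹ : unitaryGroup (Fin d) ℂ) : Matrix (Fin d) (Fin d) ℂ) *ᵥ ψ
        = Pi.single ⟨0, hd⟩ 1 := by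
      rw [← hW, mulVec_mulVec, ← UnitaryGroup.mul_val, inv_mul_cancel, UnitaryGroup.one_val,
        one_mulVec]
    rw [UnitaryGroup.mul_val, ← mulVec_mulVec, hWψ, hX, smul_smul, mul_inv_cancel₀ hs, one_smul]

theorem isMulRightInvariant_of_isProbabilityMeasure {d : ℕ} (μ : Measure (unitaryGroup (Fin d) ℂ))
    [μ.IsHaarMeasure] [IsProbabilityMeasure μ] : μ.IsMulRightInvariant := by
  have : LocallyCompactSpace (Matrix (Fin d) (Fin d) ℂ) :=
    inferInstanceAs (LocallyCompactSpace (Fin d → Fin d → ℂ))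
  have : LocallyCompactSpace (unitaryGroup (Fin d) ℂ) :=
    (isClosed_unitary (R := Matrix (Fin d) (Fin d) ℂ)
      ).isClosedEmbedding_subtypeVal.locallyCompactSpace
  refine ⟨fun g => ?_⟩
  have : IsProbabilityMeasure (μ.map (· * g)) :=
    Measure.isProbabilityMeasure_map (measurable_mul_const g).aemeasurable
  exact Measure.isHaarMeasure_eq_of_isProbabilityMeasure _ _

theorem measurePreserving_mulVec {d : ℕ} (U : unitaryGroup (Fin d) ℂ) :
    MeasurePreserving (fun z : Fin d → ℂ => (U : Matrix (Fin d) (Fin d) ℂ) *ᵥ z) := by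
  let e : (Fin d → ℂ) ≃L[ℂ] (Fin d → ℂ) := (UnitaryGroup.toLinearEquiv U).toContinuousLinearEquiv
  have he (z : Fin d → ℂ) : e z = (U : Matrix (Fin d) (Fin d) ℂ) *ᵥ z := rfl
  have hm : Measurable e := e.continuous.measurable
  have hmap := Measure.isAddLeftInvariant_eq_smul ((volume : Measure (Fin d → ℂ)).map e) volume
  set c := Measure.addHaarScalarFactor ((volume : Measure (Fin d → ℂ)).map e) volume
  have hI : ∫ z : Fin d → ℂ, Real.exp (-diagForm 1 z) ≠ 0 := by
    have h := integral_diagForm_pow_mul_exp (d := d) 0 1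
    simp only [pow_zero, one_mul] at h
    rw [h]
    simp [Real.pi_ne_zero]
  have hc : c = 1 := by
    have h : ∫ z, Real.exp (-diagForm 1 z) ∂((volume : Measure (Fin d → ℂ)).map e)
        = ∫ z : Fin d → ℂ, Real.exp (-diagForm 1 z) := by
      rw [integral_map hm.aemeasurable
        (by have := continuous_diagForm (1 : Fin d → ℝ); fun_prop)]
      simp only [he, diagForm_one_mulVec]
    rw [hmap, integral_smul_nnreal_measure] at h
    have h' : (c : ℝ) * ∫ z : Fin d → ℂ, Real.exp (-diagForm 1 z)
        = 1 * ∫ z : Fin d → ℂ, Real.exp (-diagForm 1 z) := by rw [one_mul]; exact h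
    exact_mod_cast mul_right_cancel₀ hI h'
  refine ⟨hm, ?_⟩
  change (volume : Measure (Fin d → ℂ)).map e = volume
  rw [hmap, hc, one_smul]

/-- By right invariance and homogeneity, the Haar moment at any vector is determined by the one at a
given unit vector. -/
theorem integral_diagForm_mulVec_pow {d : ℕ} (hd : 0 < d) (p : ℕ)
    (μ : Measure (unitaryGroup (Fin d) ℂ)) [μ.IsHaarMeasure] [IsProbabilityMeasure μ]
    (a : Fin d → ℝ) (ψ z : Fin d → ℂ) (hψ : diagForm 1 ψ = 1) :
    ∫ U : unitaryGroup (Fin d) ℂ, diagForm a ((U : Matrix (Fin d) (Fin d) ℂ) *ᵥ z) ^ p ∂μ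
      = diagForm 1 z ^ p *
        ∫ U : unitaryGroup (Fin d) ℂ, diagForm a ((U : Matrix (Fin d) (Fin d) ℂ) *ᵥ ψ) ^ p ∂μ := by
  have := isMulRightInvariant_of_isProbabilityMeasure μ
  obtain ⟨V, hV⟩ := exists_unitary_smul_mulVec_eq hd ψ z hψ
  rw [← integral_const_mul, ← integral_mul_right_eq_self (fun U : unitaryGroup (Fin d) ℂ =>
    diagForm 1 z ^ p * diagForm a ((U : Matrix (Fin d) (Fin d) ℂ) *ᵥ ψ) ^ p) V]
  refine integral_congr_ae (.of_forall fun U => ?_)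
  simp only
  conv_lhs => rw [hV]
  rw [mulVec_smul, diagForm_smul, mul_pow, Complex.norm_real,
    Real.norm_of_nonneg (Real.sqrt_nonneg _), Real.sq_sqrt (diagForm_one_nonneg z), mulVec_mulVec,
    UnitaryGroup.mul_val]

theorem continuous_unitary_mulVec {d : ℕ} :
    Continuous fun x : unitaryGroup (Fin d) ℂ × (Fin d → ℂ) =>
      (x.1 : Matrix (Fin d) (Fin d) ℂ) *ᵥ x.2 := by
  fun_prop

/-- Averaging the Gaussian integral over the unitary group factors it into a Haar moment and a
radial moment. -/
theorem integral_haar_mul_integral_gaussian {d : ℕ} (hd : 0 < d) (p : ℕ)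
    (μ : Measure (unitaryGroup (Fin d) ℂ)) [μ.IsHaarMeasure] [IsProbabilityMeasure μ]
    (a : Fin d → ℝ) (ψ : Fin d → ℂ) (hψ : diagForm 1 ψ = 1) :
    (∫ U : unitaryGroup (Fin d) ℂ, diagForm a ((U : Matrix (Fin d) (Fin d) ℂ) *ᵥ ψ) ^ p ∂μ) *
        ∫ z : Fin d → ℂ, diagForm 1 z ^ p * Real.exp (-diagForm 1 z)
      = ∫ z : Fin d → ℂ, diagForm a z ^ p * Real.exp (-diagForm 1 z) := by
  have hint : Integrable (fun x : unitaryGroup (Fin d) ℂ × (Fin d → ℂ) =>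
      diagForm a ((x.1 : Matrix (Fin d) (Fin d) ℂ) *ᵥ x.2) ^ p * Real.exp (-diagForm 1 x.2))
      (μ.prod volume) := by
    refine (((integrable_diagForm_pow_mul_exp (d := d) p 1).const_mul
      ((∑ j, |a j|) ^ p)).comp_snd μ).mono' ?_ (.of_forall fun x => ?_)
    · have h1 := (continuous_diagForm a).comp (continuous_unitary_mulVec (d := d))
      have h2 := continuous_diagForm (1 : Fin d → ℝ)
      exact Continuous.aestronglyMeasurable
        ((h1.pow p).mul (Real.continuous_exp.comp (h2.comp continuous_snd).neg))
    · rw [norm_mul, norm_pow, Real.norm_eq_abs, Real.norm_eq_abs, Real.abs_exp, ← mul_assoc,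
        ← mul_pow, ← diagForm_one_mulVec x.1 x.2]
      gcongr
      exact abs_diagForm_le a _
  have hinv (U : unitaryGroup (Fin d) ℂ) :
      ∫ z : Fin d → ℂ, diagForm a ((U : Matrix (Fin d) (Fin d) ℂ) *ᵥ z) ^ p *
          Real.exp (-diagForm 1 z)
        = ∫ z : Fin d → ℂ, diagForm a z ^ p * Real.exp (-diagForm 1 z) := by
    have hU := measurePreserving_mulVec U
    conv_rhs => rw [← hU.map_eq]
    rw [integral_map hU.measurable.aemeasurable]
    · simp only [diagForm_one_mulVec]
    · have h1 := continuous_diagForm a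
      have h2 := continuous_diagForm (1 : Fin d → ℝ)
      exact Continuous.aestronglyMeasurable (by fun_prop)
  calc _ = ∫ z : Fin d → ℂ, ∫ U : unitaryGroup (Fin d) ℂ,
        diagForm a ((U : Matrix (Fin d) (Fin d) ℂ) *ᵥ z) ^ p * Real.exp (-diagForm 1 z) ∂μ := by
        rw [← integral_const_mul]
        refine integral_congr_ae (.of_forall fun z => ?_)
        simp only [integral_mul_const]
        rw [integral_diagForm_mulVec_pow hd p μ a ψ z hψ]
        ring
    _ = ∫ U : unitaryGroup (Fin d) ℂ, (∫ z : Fin d → ℂ,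
        diagForm a ((U : Matrix (Fin d) (Fin d) ℂ) *ᵥ z) ^ p * Real.exp (-diagForm 1 z)) ∂μ :=
        (integral_integral_swap hint).symm
    _ = _ := by simp [hinv]

theorem Matrix.IsHermitian.trace_pow_eq_sum_eigenvalues_pow {d : ℕ}
    {H : Matrix (Fin d) (Fin d) ℂ} (hH : H.IsHermitian) (n : ℕ) :
    (H ^ n).trace = ∑ j, (hH.eigenvalues j : ℂ) ^ n := by
  conv_lhs => rw [hH.spectral_theorem]
  rw [← map_pow, Unitary.conjStarAlgAut_apply, trace_mul_comm, ← mul_assoc,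
    Unitary.coe_star_mul_self, one_mul, diagonal_pow, trace_diagonal]
  simp

theorem trace_conj_vecMulVec_mul_eq_diagForm {d : ℕ}
    {H : Matrix (Fin d) (Fin d) ℂ} (hH : H.IsHermitian) (U : unitaryGroup (Fin d) ℂ)
    (ψ : Fin d → ℂ) :
    ((U : Matrix (Fin d) (Fin d) ℂ) * vecMulVec ψ (star ψ)
        * star (U : Matrix (Fin d) (Fin d) ℂ) * H).trace
      = (diagForm hH.eigenvalues (((hH.eigenvectorUnitary⁻¹ * U : unitaryGroup (Fin d) ℂ) :
          Matrix (Fin d) (Fin d) ℂ) *ᵥ ψ) : ℂ) := by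
  have hinv : ((hH.eigenvectorUnitary⁻¹ : unitaryGroup (Fin d) ℂ) : Matrix (Fin d) (Fin d) ℂ)
      = (hH.eigenvectorUnitary : Matrix (Fin d) (Fin d) ℂ)ᴴ := rfl
  rw [mul_vecMulVec, vecMulVec_mul, star_eq_conjTranspose, ← star_mulVec, UnitaryGroup.mul_val,
    ← mulVec_mulVec, hinv]
  generalize (U : Matrix (Fin d) (Fin d) ℂ) *ᵥ ψ = w
  conv_lhs => rw [hH.spectral_theorem]
  rw [Unitary.conjStarAlgAut_apply, star_eq_conjTranspose, vecMulVec_mul, trace_vecMulVec,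
    ← vecMul_vecMul, dotProduct_comm, ← dotProduct_mulVec, ← vecMul_vecMul]
  generalize (hH.eigenvectorUnitary : Matrix (Fin d) (Fin d) ℂ) = V
  rw [show star w ᵥ* V = star (Vᴴ *ᵥ w) by rw [star_mulVec, conjTranspose_conjTranspose]]
  simp only [diagForm, dotProduct, vecMul_diagonal, Complex.ofReal_sum, Complex.ofReal_mul,
    Complex.ofReal_pow, ← Complex.conj_mul']
  refine Finset.sum_congr rfl fun j _ => ?_
  simp
  ring

/-- For a pure state `|ψ⟩⟨ψ|` (with `ψ` a unit vector in `ℂ^d`), the `p`-th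
Haar moment of the mean energy admits the exact formula
`∫ (Tr[U |ψ⟩⟨ψ| U† H])^p dμ = ((d−1)!/(p+d−1)!) Σ_{τ ∈ S_p} H[τ]`. -/
theorem haar_moment_pure_state (d p : ℕ) (hd : 1 ≤ d) (hp : 1 ≤ p)
    (μ : Measure (Matrix.unitaryGroup (Fin d) ℂ))
    [μ.IsHaarMeasure] [IsProbabilityMeasure μ]
    (H : Matrix (Fin d) (Fin d) ℂ) (hH : H.IsHermitian)
    (ψ : Fin d → ℂ) (hψ : ∑ i, ‖ψ i‖ ^ 2 = 1) :
    (∫ U : Matrix.unitaryGroup (Fin d) ℂ,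
        (((U : Matrix (Fin d) (Fin d) ℂ) * Matrix.vecMulVec ψ (star ψ)
            * star (U : Matrix (Fin d) (Fin d) ℂ) * H).trace) ^ p ∂μ)
      = (((d - 1).factorial : ℂ) / ((p + d - 1).factorial : ℂ))
          * ∑ τ : Equiv.Perm (Fin p), permTraceProd H τ := by
  have hψ' : diagForm 1 ψ = 1 := by simpa [diagForm] using hψ
  obtain ⟨d, rfl⟩ : ∃ e, d = e + 1 := ⟨d - 1, by omega⟩
  have hfub := integral_haar_mul_integral_gaussian hd p μ hH.eigenvalues ψ hψ'
  rw [integral_diagForm_pow_mul_exp, integral_diagForm_pow_mul_exp,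
    sum_prod_mul_prod_factorial hH.eigenvalues] at hfub
  have hnorm : (∑ i : Fin p → Fin (d + 1), (∏ k, (1 : Fin (d + 1) → ℝ) (i k)) *
      ∏ j, ((Finset.univ.filter fun k => i k = j).card.factorial : ℝ)) * d.factorial
        = (p + d).factorial := by
    simp only [Pi.one_apply, Finset.prod_const_one, one_mul]
    exact_mod_cast sum_prod_factorial_mul_factorial p d
  have hS : ∑ τ : Equiv.Perm (Fin p), permTraceProd H τ
      = ((∑ τ : Equiv.Perm (Fin p),
          ((cycleLengths τ).map fun n => ∑ j, hH.eigenvalues j ^ n).prod : ℝ) : ℂ) := by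
    push_cast
    refine Finset.sum_congr rfl fun τ _ => ?_
    rw [permTraceProd, ← Complex.ofRealHom_eq_coe, map_multiset_prod, Multiset.map_map]
    simp [hH.trace_pow_eq_sum_eigenvalues_pow]
  simp only [trace_conj_vecMulVec_mul_eq_diagForm hH]
  rw [integral_mul_left_eq_self (fun U : unitaryGroup (Fin (d + 1)) ℂ =>
    (diagForm hH.eigenvalues ((U : Matrix (Fin (d + 1)) (Fin (d + 1)) ℂ) *ᵥ ψ) : ℂ) ^ p), hS]
  simp only [← Complex.ofReal_pow]
  rw [integral_complex_ofReal, Nat.add_sub_cancel, ← add_assoc, Nat.add_sub_cancel]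
  rw [div_mul_eq_mul_div, eq_div_iff (by exact_mod_cast (p + d).factorial_ne_zero)]
  rw [← Complex.ofReal_natCast, ← Complex.ofReal_natCast, ← Complex.ofReal_mul,
    ← Complex.ofReal_mul, Complex.ofReal_inj, ← hnorm]
  have hpi : Real.pi ^ (d + 1) ≠ 0 := by positivity
  refine mul_left_cancel₀ hpi ?_
  linear_combination (d.factorial : ℝ) * hfub
end

section
/- Let d ≥ 2, let H be a d×d Hermitian matrix and ρ a d×d density matrix such that ΔH := H − (Tr[H]/d)·I and Δρ := ρ − I/d are both nonzero. For p ∈ ℕ set Σ^(p) := ∫_{U(d)} (Tr[U ρ U† H] − Tr[H]/d)^p dμ_Haar(U), Σ² := Tr[ΔH²]·Tr[Δρ²]/(d²−1), and G_p := (p−1)!!·(Σ²)^{p/2}. Then for every odd integer p with 3 ≤ p, p² ≤ d, and 6p^{7/2} < d², one has |Σ^(p)| ≤ G_p · √(η_{ΔH}) · (1 − 6p^{7/2}/d²)^{−1} · ( ⌈p!/e⌉/(p−1)!! − 1 ) · Cat_p · (1 + p²/d), where Cat_p = (1/(p+1))·C(2p,p) is the p-th Catalan number and e is Euler's number. -/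
open MeasureTheory Matrix
open scoped ComplexOrder

/-- `η_Θ := (Σ_i |λ_i|³)² / (Σ_i λ_i²)³` for a Hermitian matrix `Θ` with eigenvalues `λ_i`. -/
noncomputable def eta {d : ℕ} {Θ : Matrix (Fin d) (Fin d) ℂ} (hΘ : Θ.IsHermitian) : ℝ :=
  (∑ i, |hΘ.eigenvalues i| ^ 3) ^ 2 / (∑ i, hΘ.eigenvalues i ^ 2) ^ 3

section HaarMoments

variable {d p : ℕ}

/-- The mixed moment `E ∏ₖ (U B U†)_{iₖ jₖ}` of the entries of a randomly rotated matrix. -/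
noncomputable def entryMoment (μ : Measure (Matrix.unitaryGroup (Fin d) ℂ))
    (B : Matrix (Fin d) (Fin d) ℂ) (i j : Fin p → Fin d) : ℂ :=
  ∫ U : Matrix.unitaryGroup (Fin d) ℂ,
    ∏ k, ((U : Matrix (Fin d) (Fin d) ℂ) * B * star (U : Matrix (Fin d) (Fin d) ℂ)) (i k) (j k) ∂μ

theorem norm_conj_apply_le (U : Matrix.unitaryGroup (Fin d) ℂ) (B : Matrix (Fin d) (Fin d) ℂ)
    (i j : Fin d) :
    ‖((U : Matrix (Fin d) (Fin d) ℂ) * B * star (U : Matrix (Fin d) (Fin d) ℂ)) i j‖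
      ≤ ∑ y, ∑ x, ‖B x y‖ := by
  simp only [Matrix.mul_apply, Matrix.star_apply, Finset.sum_mul]
  refine (norm_sum_le _ _).trans (Finset.sum_le_sum fun y _ => ?_)
  refine (norm_sum_le _ _).trans (Finset.sum_le_sum fun x _ => ?_)
  rw [norm_mul, norm_mul, norm_star]
  have h₁ := entry_norm_bound_of_unitary U.2 i x
  have h₂ := entry_norm_bound_of_unitary U.2 j y
  calc _ ≤ 1 * ‖B x y‖ * 1 := by gcongr
    _ = _ := by ring

theorem integrable_prod_conj_apply (μ : Measure (Matrix.unitaryGroup (Fin d) ℂ))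
    [IsFiniteMeasure μ] (B : Matrix (Fin d) (Fin d) ℂ) (i j : Fin p → Fin d) :
    Integrable (fun U : Matrix.unitaryGroup (Fin d) ℂ => ∏ k,
      ((U : Matrix (Fin d) (Fin d) ℂ) * B * star (U : Matrix (Fin d) (Fin d) ℂ)) (i k) (j k)) μ := by
  refine Integrable.of_bound (C := ∏ _k : Fin p, ∑ y, ∑ x, ‖B x y‖) ?_ (.of_forall fun U => ?_)
  · refine Continuous.aestronglyMeasurable (continuous_finsetProd _ fun k _ => ?_)
    have h : Continuous fun U : Matrix.unitaryGroup (Fin d) ℂ => (U : Matrix (Fin d) (Fin d) ℂ) :=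
      continuous_subtype_val
    exact ((h.matrix_mul continuous_const).matrix_mul h.star).matrix_elem _ _
  · rw [norm_prod]
    exact Finset.prod_le_prod (fun _ _ => norm_nonneg _) fun k _ => norm_conj_apply_le U B _ _

theorem integral_sum_mul_prod_conj_apply (μ : Measure (Matrix.unitaryGroup (Fin d) ℂ))
    [IsFiniteMeasure μ] (B : Matrix (Fin d) (Fin d) ℂ) {α : Type*} [Fintype α]
    (c : α → ℂ) (i j : α → Fin p → Fin d) :
    ∫ U : Matrix.unitaryGroup (Fin d) ℂ, ∑ a, c a * ∏ k,
      ((U : Matrix (Fin d) (Fin d) ℂ) * B * star (U : Matrix (Fin d) (Fin d) ℂ)) (i a k) (j a k) ∂μ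
      = ∑ a, c a * entryMoment μ B (i a) (j a) := by
  rw [integral_finsetSum _ fun a _ => (integrable_prod_conj_apply μ B _ _).const_mul _]
  simp only [integral_const_mul, entryMoment]

/-- Tensor powers of unitaries commute with the averaged tensor power of `U B U†`. -/
theorem entryMoment_comm (μ : Measure (Matrix.unitaryGroup (Fin d) ℂ)) [μ.IsHaarMeasure]
    [IsProbabilityMeasure μ] (B : Matrix (Fin d) (Fin d) ℂ) (V : Matrix.unitaryGroup (Fin d) ℂ)
    (i j : Fin p → Fin d) :
    ∑ a : Fin p → Fin d, (∏ k, (V : Matrix (Fin d) (Fin d) ℂ) (i k) (a k)) * entryMoment μ B a j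
      = ∑ b : Fin p → Fin d,
        (∏ k, (V : Matrix (Fin d) (Fin d) ℂ) (b k) (j k)) * entryMoment μ B i b := by
  rw [← integral_sum_mul_prod_conj_apply μ B _ (fun a => a) (fun _ => j),
    ← integral_sum_mul_prod_conj_apply μ B _ (fun _ => i) (fun b => b)]
  refine Eq.trans ?_ (integral_mul_left_eq_self _ V)
  congr 1
  ext U
  have hV : star (V : Matrix (Fin d) (Fin d) ℂ) * V = 1 := Unitary.coe_star_mul_self V
  have key : (V : Matrix (Fin d) (Fin d) ℂ) *
        ((U : Matrix (Fin d) (Fin d) ℂ) * B * star (U : Matrix (Fin d) (Fin d) ℂ))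
      = ((V * U : Matrix.unitaryGroup (Fin d) ℂ) : Matrix (Fin d) (Fin d) ℂ) * B
        * star ((V * U : Matrix.unitaryGroup (Fin d) ℂ) : Matrix (Fin d) (Fin d) ℂ) * V := by
    simp only [Submonoid.coe_mul, star_mul, Matrix.mul_assoc, hV, Matrix.mul_one]
  simp only [← Finset.prod_mul_distrib]
  rw [← Fintype.piFinset_univ,
    ← Finset.prod_univ_sum (fun _ => Finset.univ) (fun k x => (V : Matrix (Fin d) (Fin d) ℂ) (i k) x *
      ((U : Matrix (Fin d) (Fin d) ℂ) * B * star (U : Matrix (Fin d) (Fin d) ℂ)) x (j k)),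
    ← Finset.prod_univ_sum (fun _ => Finset.univ) (fun k x => (V : Matrix (Fin d) (Fin d) ℂ) x (j k) *
      (((V * U : Matrix.unitaryGroup (Fin d) ℂ) : Matrix (Fin d) (Fin d) ℂ) * B
        * star ((V * U : Matrix.unitaryGroup (Fin d) ℂ) : Matrix (Fin d) (Fin d) ℂ)) (i k) x)]
  refine Finset.prod_congr rfl fun k _ => ?_
  have := congrFun (congrFun key (i k)) (j k)
  rw [Matrix.mul_apply, Matrix.mul_apply] at this
  rw [this]
  exact Finset.sum_congr rfl fun x _ => mul_comm _ _

/-- Invariance under diagonal sign matrices. -/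
theorem entryMoment_eq_zero (μ : Measure (Matrix.unitaryGroup (Fin d) ℂ)) [μ.IsHaarMeasure]
    [IsProbabilityMeasure μ] (B : Matrix (Fin d) (Fin d) ℂ) {ι : Fin p → Fin d}
    (hι : Function.Injective ι) {a : Fin p → Fin d}
    (ha : ∀ σ : Equiv.Perm (Fin p), a ≠ ι ∘ σ) : entryMoment μ B a ι = 0 := by
  obtain ⟨m, hm⟩ : ∃ m, ∀ k, a k ≠ ι m := by
    by_contra! h
    choose f hf using h
    have hfi : Function.Injective f := fun x y hxy => hι (by rw [← hf x, ← hf y, hxy])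
    let e := Equiv.ofBijective f (Finite.injective_iff_bijective.mp hfi)
    refine ha e.symm (funext fun k => ?_)
    have := hf (e.symm k)
    rw [Function.comp_apply, ← this]
    exact congrArg a (e.apply_symm_apply k).symm
  let s : Fin d → ℂ := fun x => if x = ι m then -1 else 1
  have hs : Matrix.diagonal s ∈ Matrix.unitaryGroup (Fin d) ℂ := by
    rw [Matrix.mem_unitaryGroup_iff, Matrix.star_eq_conjTranspose, Matrix.diagonal_conjTranspose,
      Matrix.diagonal_mul_diagonal, ← Matrix.diagonal_one]
    congr 1
    ext x
    by_cases hx : x = ι m <;> simp [s, hx]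
  have h := entryMoment_comm μ B ⟨_, hs⟩ a ι
  rw [Finset.sum_eq_single a, Finset.sum_eq_single ι] at h
  · have h₁ : ∏ k, Matrix.diagonal s (a k) (a k) = 1 :=
      Finset.prod_eq_one fun k _ => by simp [s, hm k]
    have h₂ : ∏ k, Matrix.diagonal s (ι k) (ι k) = -1 := by
      simp [s, hι.eq_iff, Finset.prod_ite_eq']
    simp only [h₁, h₂] at h
    linear_combination h / 2
  · intro b _ hb
    obtain ⟨k, hk⟩ := Function.ne_iff.mp hb
    rw [Finset.prod_eq_zero (Finset.mem_univ k), zero_mul]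
    exact Matrix.diagonal_apply_ne _ hk
  · simp
  · intro b _ hb
    obtain ⟨k, hk⟩ := Function.ne_iff.mp hb
    rw [Finset.prod_eq_zero (Finset.mem_univ k), zero_mul]
    exact Matrix.diagonal_apply_ne _ hk.symm
  · simp

/-- A multilinear form vanishing on the column tuples of unitary matrices vanishes on all
orthogonal tuples. -/
theorem sum_prod_mul_eq_zero_of_orthogonal {ι : Fin p → Fin d} (hι : Function.Injective ι)
    {c : (Fin p → Fin d) → ℂ}
    (h : ∀ V : Matrix.unitaryGroup (Fin d) ℂ,
      ∑ b, (∏ k, (V : Matrix (Fin d) (Fin d) ℂ) (b k) (ι k)) * c b = 0)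
    (u : Fin p → Fin d → ℂ) (hu : ∀ k, u k ≠ 0) (huo : ∀ k l, k ≠ l → star (u k) ⬝ᵥ u l = 0) :
    ∑ b, (∏ k, u k (b k)) * c b = 0 := by
  let v : Fin p → EuclideanSpace ℂ (Fin d) := fun k => WithLp.toLp 2 (u k)
  have hv : ∀ k, ‖v k‖ ≠ 0 := fun k => by
    rw [norm_ne_zero_iff]
    exact fun h0 => hu k (congrArg WithLp.ofLp h0)
  let g : Fin p → EuclideanSpace ℂ (Fin d) := fun k => ((‖v k‖⁻¹ : ℝ) : ℂ) • v k
  have hg : ∀ k, Function.extend ι g 0 (ι k) = g k := fun k => hι.extend_apply _ _ _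
  have hgo : Orthonormal ℂ g := by
    refine ⟨fun k => by simp [g, norm_smul, hv k], fun k l hkl => ?_⟩
    have : inner ℂ (v k) (v l) = star (u k) ⬝ᵥ u l := by
      rw [dotProduct_comm]
      rfl
    simp only [g, inner_smul_left, inner_smul_right]
    rw [this, huo k l hkl, mul_zero, mul_zero]
  have ho : Orthonormal ℂ ((Set.range ι).domRestrict (Function.extend ι g 0)) := by
    convert hgo.comp (Equiv.ofInjective ι hι).symm (Equiv.injective _) using 1
    ext1 x
    obtain ⟨k, rfl⟩ := (Equiv.ofInjective ι hι).surjective x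
    simp [hg]
  obtain ⟨b, hb⟩ := ho.exists_orthonormalBasis_extension_of_card_eq (by simp)
  have hV := (EuclideanSpace.basisFun (Fin d) ℂ).toMatrix_orthonormalBasis_mem_unitary b
  have key := h ⟨_, hV⟩
  have hcol : ∀ x k, (EuclideanSpace.basisFun (Fin d) ℂ).toBasis.toMatrix b x (ι k)
      = ((‖v k‖⁻¹ : ℝ) : ℂ) * u k x := by
    intro x k
    simp only [Module.Basis.toMatrix_apply, hb _ ⟨k, rfl⟩, hg]
    simp [g, v]
  simp only [hcol, Finset.prod_mul_distrib, mul_assoc] at key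
  rw [← Finset.mul_sum] at key
  refine (mul_eq_zero.mp key).resolve_left (Finset.prod_ne_zero_iff.mpr fun k _ => ?_)
  exact_mod_cast inv_ne_zero (hv k)

/-- If `2p ≤ d`, a `p`-linear form on `ℂᵈ` vanishing on the column tuples of unitary matrices
is zero. -/
theorem eq_zero_of_unitary_columns (hpd : 2 * p ≤ d) {ι : Fin p → Fin d}
    (hι : Function.Injective ι) {c : (Fin p → Fin d) → ℂ}
    (h : ∀ V : Matrix.unitaryGroup (Fin d) ℂ,
      ∑ b, (∏ k, (V : Matrix (Fin d) (Fin d) ℂ) (b k) (ι k)) * c b = 0)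
    (b : Fin p → Fin d) : c b = 0 := by
  obtain ⟨f, hf, hfb⟩ : ∃ f : Fin p → Fin d, Function.Injective f ∧ ∀ n k, f n ≠ b k := by
    have hcard : Fintype.card (Fin p) ≤ Fintype.card ↥(Finset.univ.image b)ᶜ := by
      have : (Finset.univ.image b).card ≤ p := by
        simpa using Finset.card_image_le (s := (Finset.univ : Finset (Fin p))) (f := b)
      rw [Fintype.card_coe, Finset.card_compl, Fintype.card_fin, Fintype.card_fin]
      omega
    obtain ⟨e⟩ := Function.Embedding.nonempty_of_card_le hcard
    refine ⟨fun n => (e n : Fin d), fun x y hxy => e.injective (Subtype.ext hxy), fun n k hnk => ?_⟩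
    have := (e n).2
    rw [Finset.mem_compl] at this
    exact this (Finset.mem_image.mpr ⟨k, Finset.mem_univ k, hnk.symm⟩)
  -- `v z k = z √mₖ e_{bₖ} + wₖ` with `mₖ` the multiplicity of `bₖ` and `wₖ` in the span of
  -- the fresh basis vectors `e_{fₙ}`, chosen so that the tuple is orthogonal for `|z| = 1`.
  let m : Fin p → ℕ := fun k => (Finset.univ.filter fun n => b n = b k).card
  have hm : ∀ k, m k ≠ 0 := fun k => Finset.card_ne_zero.mpr ⟨k, by simp⟩
  let s : Fin p → ℝ := fun k => Real.sqrt (m k)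
  have hs : ∀ k, ((s k : ℝ) : ℂ) * s k = m k := fun k => by
    rw [← Complex.ofReal_mul, Real.mul_self_sqrt (Nat.cast_nonneg _), Complex.ofReal_natCast]
  have hs0 : ∀ k, (s k : ℂ) ≠ 0 := fun k h0 => by
    have := hs k
    rw [h0, zero_mul] at this
    exact hm k (by exact_mod_cast this.symm)
  let α : Fin p → Fin p → ℝ := fun k n =>
    (if k = n then (m k : ℝ) else 0) - if b n = b k then 1 else 0
  let w : Fin p → Fin d → ℂ := fun k => ∑ n, Pi.single (f n) (α k n : ℂ)
  let v : ℂ → Fin p → Fin d → ℂ := fun z k => Pi.single (b k) (z * s k) + w k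
  have hwb : ∀ k l, w k (b l) = 0 := fun k l => by
    simp [w, Finset.sum_apply, (hfb _ l).symm]
  have hww : ∀ k l, k ≠ l → star (w k) ⬝ᵥ w l = if b k = b l then -(m k : ℂ) else 0 := by
    intro k l hkl
    have h1 : star (w k) ⬝ᵥ w l = ∑ n, (α k n : ℂ) * α l n := by
      have hwf : ∀ n, w k (f n) = α k n := fun n => by
        simp [w, Finset.sum_apply, Pi.single_apply, hf.eq_iff]
      simp only [w, dotProduct_sum, dotProduct_single]
      refine Finset.sum_congr rfl fun n _ => ?_
      have := hwf n
      simp only [w] at this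
      rw [Pi.star_apply, this]
      simp
    have h2 : ∑ n, α k n * α l n = if b k = b l then -(m k : ℝ) else 0 := by
      by_cases hb : b k = b l
      · have hmm : m l = m k := by simp [m, hb]
        have : ∀ n, α k n * α l n = (if k = n then -(m k : ℝ) else 0)
            + (if l = n then -(m k : ℝ) else 0) + if b n = b k then 1 else 0 := by
          intro n
          simp only [α, hmm, ← hb]
          split_ifs <;> simp_all <;> ring
        rw [Finset.sum_congr rfl fun n _ => this n, Finset.sum_add_distrib, Finset.sum_add_distrib,
          if_pos hb]
        simp [m]
      · rw [if_neg hb]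
        refine Finset.sum_eq_zero fun n _ => ?_
        simp only [α]
        split_ifs <;> simp_all
    rw [h1]
    split_ifs at h2 ⊢ <;> exact_mod_cast h2
  have hvo : ∀ z : ℂ, ‖z‖ = 1 → ∀ k l, k ≠ l → star (v z k) ⬝ᵥ v z l = 0 := by
    intro z hz k l hkl
    have hzz : star z * z = 1 := by
      rw [Complex.star_def, Complex.conj_mul', hz]
      simp
    have h1 : star (v z k) ⬝ᵥ v z l
        = star (v z k) (b l) * (z * s l) + (star (z * (s k : ℂ)) * w l (b k) + star (w k) ⬝ᵥ w l) := by
      simp only [v, dotProduct_add, star_add, dotProduct_single, add_dotProduct, ← Pi.single_star,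
        single_dotProduct]
    rw [h1, hww k l hkl, hwb]
    simp only [v, Pi.add_apply, hwb, mul_zero, zero_add, add_zero, Pi.star_apply]
    by_cases hb : b k = b l
    · have hsl : s l = s k := by simp [s, m, hb]
      rw [hb, if_pos rfl, Pi.single_eq_same, hsl, ← hs k, star_mul', Complex.star_def,
        Complex.conj_ofReal]
      rw [Complex.star_def] at hzz
      linear_combination (s k : ℂ) ^ 2 * hzz
    · rw [if_neg hb, Pi.single_eq_of_ne (Ne.symm hb), star_zero, zero_mul, zero_add]
  let Q : Polynomial ℂ := ∑ a : Fin p → Fin d,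
    (∏ k, (Polynomial.C ((Pi.single (b k) (s k : ℂ) : Fin d → ℂ) (a k)) * Polynomial.X
    + Polynomial.C (w k (a k)))) * Polynomial.C (c a)
  have hQ : Q = 0 := by
    refine Polynomial.eq_zero_of_infinite_isRoot _ (Set.Infinite.mono (s := Metric.sphere (0:ℂ) 1) ?_ ?_)
    · intro z hz
      have hz : ‖z‖ = 1 := by simpa using hz
      have hz0 : z ≠ 0 := by rintro rfl; simp at hz
      have := sum_prod_mul_eq_zero_of_orthogonal hι h (v z) (fun k h0 => ?_) (hvo z hz)
      · rw [Set.mem_ofPred_eq, Polynomial.IsRoot, ← this]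
        simp only [Q, Polynomial.eval_finsetSum, Polynomial.eval_mul, Polynomial.eval_prod,
          Polynomial.eval_add, Polynomial.eval_C, Polynomial.eval_X]
        refine Finset.sum_congr rfl fun a _ => ?_
        congr 1
        refine Finset.prod_congr rfl fun k _ => ?_
        simp [v, Pi.single_apply, mul_comm]
      · have := congrFun h0 (b k)
        simp [v, hwb, hz0, hs0] at this
    · intro hfin
      have h1 : (1 : Cardinal) < Module.rank ℝ ℂ := by simp
      have h2 : (Metric.sphere (0 : ℂ) 1).Nontrivial := ⟨1, by simp, -1, by simp, by norm_num⟩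
      exact (isPreconnected_sphere h1 (0 : ℂ) 1).infinite_of_nontrivial h2 hfin
  have hcoef := congrArg (Polynomial.coeff · (p * 1)) hQ
  have hprod : ∀ a : Fin p → Fin d, (∏ k,
      (Polynomial.C ((Pi.single (b k) (s k : ℂ) : Fin d → ℂ) (a k)) * Polynomial.X
        + Polynomial.C (w k (a k)))).coeff (p * 1)
      = ∏ k, (Pi.single (b k) (s k : ℂ) : Fin d → ℂ) (a k) := by
    intro a
    have := Polynomial.coeff_prod_of_natDegree_le (s := (Finset.univ : Finset (Fin p))) (fun k =>
      Polynomial.C ((Pi.single (b k) (s k : ℂ) : Fin d → ℂ) (a k)) * Polynomial.X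
        + Polynomial.C (w k (a k))) 1 (fun k _ => Polynomial.natDegree_linear_le)
    rw [Finset.card_univ, Fintype.card_fin] at this
    rw [this]
    exact Finset.prod_congr rfl fun k _ => by simp [-map_mul]
  simp only [Q, Polynomial.finsetSum_coeff, Polynomial.coeff_mul_C, hprod,
    Polynomial.coeff_zero] at hcoef
  rw [Finset.sum_eq_single b] at hcoef
  · refine (mul_eq_zero.mp hcoef).resolve_left (Finset.prod_ne_zero_iff.mpr fun k _ => ?_)
    simpa using hs0 k
  · intro a _ ha
    obtain ⟨k, hk⟩ := Function.ne_iff.mp ha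
    rw [Finset.prod_eq_zero (Finset.mem_univ k) (Pi.single_eq_of_ne hk _), zero_mul]
  · simp

/-- The expansion of the averaged tensor power in permutation operators. -/
theorem entryMoment_eq_sum_perm (hpd : 2 * p ≤ d) (μ : Measure (Matrix.unitaryGroup (Fin d) ℂ))
    [μ.IsHaarMeasure] [IsProbabilityMeasure μ] (B : Matrix (Fin d) (Fin d) ℂ)
    {ι : Fin p → Fin d} (hι : Function.Injective ι) (i j : Fin p → Fin d) :
    entryMoment μ B i j
      = ∑ σ : Equiv.Perm (Fin p), if i = j ∘ σ then entryMoment μ B (ι ∘ σ) ι else 0 := by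
  rw [← sub_eq_zero]
  refine eq_zero_of_unitary_columns hpd hι (c := fun b => entryMoment μ B i b
      - ∑ σ : Equiv.Perm (Fin p), if i = b ∘ σ then entryMoment μ B (ι ∘ σ) ι else 0)
    (fun V => ?_) j
  simp only [mul_sub, Finset.sum_sub_distrib]
  rw [← entryMoment_comm, sub_eq_zero]
  have hinj : Function.Injective fun σ : Equiv.Perm (Fin p) => ι ∘ σ := fun σ τ h =>
    Equiv.ext fun k => hι (congrFun h k)
  rw [← Finset.sum_subset (Finset.subset_univ (Finset.univ.image fun σ : Equiv.Perm (Fin p) => ι ∘ σ)),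
    Finset.sum_image fun _ _ _ _ h => hinj h]
  · simp only [Finset.mul_sum]
    rw [Finset.sum_comm]
    refine Finset.sum_congr rfl fun σ _ => ?_
    rw [Finset.sum_eq_single (i ∘ σ.symm)]
    · rw [if_pos (by ext; simp)]
      congr 1
      exact Fintype.prod_equiv σ _ _ fun k => by simp
    · intro b _ hb
      rw [if_neg, mul_zero]
      rintro rfl
      exact hb (by ext; simp)
    · simp
  · intro a _ ha
    rw [entryMoment_eq_zero μ B hι, mul_zero]
    rintro σ rfl
    exact ha (Finset.mem_image_of_mem _ (Finset.mem_univ σ))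

/-- The trace of `A^{⊗p}` composed with the permutation operator of `σ`. -/
noncomputable def permTrace (A : Matrix (Fin d) (Fin d) ℂ) (σ : Equiv.Perm (Fin p)) : ℂ :=
  ∑ b : Fin p → Fin d, ∏ k, A (b k) (b (σ k))

/-- The product over the cycles of `σ` of the power sums of `l`, written as a sum over the
functions that are constant on cycles. -/
def cycleSum (l : Fin d → ℝ) (σ : Equiv.Perm (Fin p)) : ℝ :=
  ∑ b : Fin p → Fin d with b ∘ σ = b, ∏ k, l (b k)

theorem permTrace_eq_cycleSum {V : Matrix (Fin d) (Fin d) ℂ} (hV : star V * V = 1)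
    (l : Fin d → ℝ) (σ : Equiv.Perm (Fin p)) :
    permTrace (V * diagonal (fun x => (l x : ℂ)) * star V) σ = (cycleSum l σ : ℂ) := by
  have h1 : ∀ b : Fin p → Fin d,
      ∏ k, (V * diagonal (fun x => (l x : ℂ)) * star V) (b k) (b (σ k))
        = ∑ j : Fin p → Fin d, (∏ k, (l (j k) : ℂ)) *
          ∏ k, (star V) (j (σ.symm k)) (b k) * V (b k) (j k) := by
    intro b
    have hentry : ∀ x y, (V * diagonal (fun x => (l x : ℂ)) * star V) x y
        = ∑ z, V x z * (l z : ℂ) * (star V) z y := fun x y => by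
      rw [Matrix.mul_apply]
      simp only [Matrix.mul_diagonal]
    simp only [hentry]
    rw [Finset.prod_univ_sum, Fintype.piFinset_univ]
    refine Finset.sum_congr rfl fun j _ => ?_
    have : ∏ k, (star V) (j (σ.symm k)) (b k) = ∏ k, (star V) (j k) (b (σ k)) :=
      (Fintype.prod_equiv σ _ _ fun k => by simp).symm
    rw [Finset.prod_mul_distrib, Finset.prod_mul_distrib, Finset.prod_mul_distrib, this]
    ring
  have h2 : ∀ j : Fin p → Fin d,
      ∑ b : Fin p → Fin d, ∏ k, (star V) (j (σ.symm k)) (b k) * V (b k) (j k)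
        = if j ∘ σ = j then 1 else 0 := by
    intro j
    rw [← Fintype.piFinset_univ, ← Finset.prod_univ_sum (fun _ => Finset.univ)
      (fun k x => (star V) (j (σ.symm k)) x * V x (j k))]
    simp only [← Matrix.mul_apply, hV, Matrix.one_apply]
    split_ifs with h
    · refine Finset.prod_eq_one fun k _ => if_pos ?_
      have := congrFun h (σ.symm k)
      simpa using this.symm
    · obtain ⟨k, hk⟩ := Function.ne_iff.mp h
      refine Finset.prod_eq_zero (Finset.mem_univ (σ k)) (if_neg fun h' => hk ?_)
      simpa using h'.symm
  rw [permTrace, Finset.sum_congr rfl fun b _ => h1 b, Finset.sum_comm]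
  simp only [← Finset.mul_sum, h2, cycleSum, Finset.sum_filter, mul_ite, mul_one, mul_zero]
  push_cast
  exact Finset.sum_congr rfl fun j _ => by split_ifs <;> simp

theorem integral_trace_pow_eq (hpd : 2 * p ≤ d) (μ : Measure (Matrix.unitaryGroup (Fin d) ℂ))
    [μ.IsHaarMeasure] [IsProbabilityMeasure μ] (A B : Matrix (Fin d) (Fin d) ℂ)
    {ι : Fin p → Fin d} (hι : Function.Injective ι) :
    ∫ U : Matrix.unitaryGroup (Fin d) ℂ, ((U : Matrix (Fin d) (Fin d) ℂ) * B
        * star (U : Matrix (Fin d) (Fin d) ℂ) * A).trace ^ p ∂μ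
      = ∑ σ : Equiv.Perm (Fin p), entryMoment μ B (ι ∘ σ) ι * permTrace A σ := by
  have h1 : ∀ M : Matrix (Fin d) (Fin d) ℂ, (M * A).trace ^ p
      = ∑ g : (Fin p → Fin d) × (Fin p → Fin d), (∏ k, A (g.2 k) (g.1 k)) *
        ∏ k, M (g.1 k) (g.2 k) := by
    intro M
    have : (M * A).trace = ∑ z : Fin d × Fin d, A z.2 z.1 * M z.1 z.2 := by
      simp only [Matrix.trace, Matrix.diag_apply, Matrix.mul_apply, Fintype.sum_prod_type, mul_comm]
    rw [this]
    calc _ = ∏ _k : Fin p, ∑ z : Fin d × Fin d, A z.2 z.1 * M z.1 z.2 := by simp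
      _ = ∑ g : Fin p → Fin d × Fin d, ∏ k, A (g k).2 (g k).1 * M (g k).1 (g k).2 := by
        rw [Finset.prod_univ_sum, Fintype.piFinset_univ]
      _ = _ := Fintype.sum_equiv (Equiv.arrowProdEquivProdArrow _ _ _) _ _ fun g => by
        rw [Finset.prod_mul_distrib]
        rfl
  simp only [h1]
  rw [integral_sum_mul_prod_conj_apply μ B
    (fun g : (Fin p → Fin d) × (Fin p → Fin d) => ∏ k, A (g.2 k) (g.1 k))
    (fun g => g.1) (fun g => g.2), Fintype.sum_prod_type_right]
  have h2 : ∀ i j : Fin p → Fin d, (∏ k, A (j k) (i k)) * entryMoment μ B i j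
      = ∑ σ : Equiv.Perm (Fin p),
        if i = j ∘ σ then entryMoment μ B (ι ∘ σ) ι * ∏ k, A (j k) (i k) else 0 := by
    intro i j
    rw [entryMoment_eq_sum_perm hpd μ B hι i j, Finset.mul_sum]
    refine Finset.sum_congr rfl fun σ _ => ?_
    split_ifs <;> ring
  simp only [h2, permTrace, Finset.mul_sum]
  rw [Finset.sum_congr rfl fun j _ => Finset.sum_comm, Finset.sum_comm]
  refine Finset.sum_congr rfl fun σ _ => Finset.sum_congr rfl fun j _ => ?_
  rw [Finset.sum_ite_eq' Finset.univ (j ∘ σ), if_pos (Finset.mem_univ _)]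
  rfl

theorem cycleSum_eq_sum_entryMoment (hpd : 2 * p ≤ d)
    (μ : Measure (Matrix.unitaryGroup (Fin d) ℂ)) [μ.IsHaarMeasure] [IsProbabilityMeasure μ]
    {W B : Matrix (Fin d) (Fin d) ℂ} (hW : star W * W = 1) {l : Fin d → ℝ}
    (hB : B = W * diagonal (fun x => (l x : ℂ)) * star W)
    {ι : Fin p → Fin d} (hι : Function.Injective ι) (τ : Equiv.Perm (Fin p)) :
    (cycleSum l τ : ℂ) = ∑ σ : Equiv.Perm (Fin p),
      entryMoment μ B (ι ∘ σ) ι * (cycleSum (fun _ : Fin d => 1) (τ * σ) : ℂ) := by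
  have h1 : ∫ U : Matrix.unitaryGroup (Fin d) ℂ, permTrace ((U : Matrix (Fin d) (Fin d) ℂ) * B
      * star (U : Matrix (Fin d) (Fin d) ℂ)) τ ∂μ = (cycleSum l τ : ℂ) := by
    have : ∀ U : Matrix.unitaryGroup (Fin d) ℂ, permTrace ((U : Matrix (Fin d) (Fin d) ℂ) * B
        * star (U : Matrix (Fin d) (Fin d) ℂ)) τ = (cycleSum l τ : ℂ) := by
      intro U
      have hU : star (U : Matrix (Fin d) (Fin d) ℂ) * U = 1 := Unitary.coe_star_mul_self U
      rw [← permTrace_eq_cycleSum (V := (U : Matrix (Fin d) (Fin d) ℂ) * W)]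
      · simp only [hB, star_mul, Matrix.mul_assoc]
      · rw [star_mul, Matrix.mul_assoc, ← Matrix.mul_assoc (star _) _ W, hU, Matrix.one_mul, hW]
    simp [this]
  have h2 := integral_sum_mul_prod_conj_apply μ B (fun _ => 1) (fun b => b)
    (fun b : Fin p → Fin d => b ∘ τ)
  simp only [one_mul, Function.comp_apply] at h2
  rw [← h1]
  simp only [permTrace]
  rw [h2, Finset.sum_congr rfl fun b _ => entryMoment_eq_sum_perm hpd μ B hι b (b ∘ τ),
    Finset.sum_comm]
  refine Finset.sum_congr rfl fun σ _ => ?_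
  have : (cycleSum (fun _ : Fin d => 1) (τ * σ) : ℂ)
      = ∑ b : Fin p → Fin d, if b = (b ∘ τ) ∘ σ then 1 else 0 := by
    simp only [cycleSum, Finset.prod_const_one, Finset.sum_filter]
    rw [Complex.ofReal_sum]
    refine Finset.sum_congr rfl fun b _ => ?_
    have hiff : b ∘ ⇑(τ * σ) = b ↔ b = (b ∘ τ) ∘ σ := eq_comm
    rw [apply_ite Complex.ofReal, Complex.ofReal_one, Complex.ofReal_zero]
    exact if_congr hiff rfl rfl
  rw [this, Finset.mul_sum]
  simp

end HaarMoments

section CycleSums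

variable {d p : ℕ}

open Equiv.Perm

open Classical in
theorem cycleSum_eq_prod (l : Fin d → ℝ) (σ : Equiv.Perm (Fin p)) :
    cycleSum l σ = ∏ q : Quotient (SameCycle.setoid σ),
      ∑ x, l x ^ (Finset.univ.filter fun k => Quotient.mk (SameCycle.setoid σ) k = q).card := by
  rw [Finset.prod_univ_sum, Fintype.piFinset_univ, cycleSum]
  symm
  refine Finset.sum_nbij (fun g k => g (Quotient.mk _ k)) ?_ ?_ ?_ ?_
  · intro g _
    refine Finset.mem_filter.mpr ⟨Finset.mem_univ _, funext fun k => congrArg g ?_⟩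
    exact Quotient.sound (s := SameCycle.setoid σ) (SameCycle.refl σ k).apply_left
  · intro g _ g' _ h
    refine funext fun q => ?_
    obtain ⟨k, rfl⟩ := Quotient.exists_rep q
    exact congrFun h k
  · intro b hb
    have hb : b ∘ σ = b := (Finset.mem_filter.mp hb).2
    have hpow : ∀ n : ℕ, ∀ k, b ((σ ^ n) k) = b k := by
      intro n
      induction n with
      | zero => simp
      | succ n ih =>
        intro k
        rw [pow_succ', Equiv.Perm.mul_apply]
        exact (congrFun hb _).trans (ih k)
    refine ⟨Quotient.lift b ?_, Finset.mem_coe.mpr (Finset.mem_univ _), rfl⟩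
    intro x y (hxy : SameCycle σ x y)
    obtain ⟨n, hn⟩ := hxy.exists_nat_pow_eq
    rw [← hn, hpow]
  · intro g _
    rw [← Finset.prod_fiberwise Finset.univ (Quotient.mk (SameCycle.setoid σ))]
    refine Finset.prod_congr rfl fun q _ => ?_
    rw [← Finset.prod_const]
    exact Finset.prod_congr rfl fun k hk =>
      congrArg (fun r => l (g r)) (Finset.mem_filter.mp hk).2.symm

theorem cycleSum_eq_zero {l : Fin d → ℝ} (hl : ∑ x, l x = 0) {σ : Equiv.Perm (Fin p)}
    {k : Fin p} (hk : σ k = k) : cycleSum l σ = 0 := by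
  classical
  rw [cycleSum_eq_prod]
  refine Finset.prod_eq_zero (Finset.mem_univ (Quotient.mk _ k)) ?_
  have : (Finset.univ.filter fun m =>
      Quotient.mk (SameCycle.setoid σ) m = Quotient.mk (SameCycle.setoid σ) k) = {k} := by
    ext m
    simp only [Finset.mem_filter, Finset.mem_univ, true_and, Finset.mem_singleton]
    refine ⟨fun h => ?_, fun h => by rw [h]⟩
    have h' : SameCycle σ m k := Quotient.exact h
    exact (h'.symm.eq_of_left hk).symm
  simpa [this] using hl

theorem sum_abs_pow_le (l : Fin d → ℝ) {m n : ℕ} (hmn : m ≤ n) :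
    ∑ x, |l x| ^ n ≤ (∑ x, |l x| ^ m) * Real.sqrt (∑ x, l x ^ 2) ^ (n - m) := by
  rw [Finset.sum_mul]
  refine Finset.sum_le_sum fun x _ => ?_
  have hx : |l x| ≤ Real.sqrt (∑ x, l x ^ 2) := by
    rw [← Real.sqrt_sq_eq_abs]
    exact Real.sqrt_le_sqrt (Finset.single_le_sum (f := fun x => l x ^ 2)
      (fun _ _ => sq_nonneg _) (Finset.mem_univ x))
  calc |l x| ^ n = |l x| ^ m * |l x| ^ (n - m) := by rw [← pow_add, Nat.add_sub_cancel' hmn]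
    _ ≤ _ := by gcongr

theorem abs_sum_pow_le (l : Fin d → ℝ) {n : ℕ} (hn : 2 ≤ n) :
    |∑ x, l x ^ n| ≤ Real.sqrt (∑ x, l x ^ 2) ^ n := by
  have h := sum_abs_pow_le l hn
  have h2 : ∑ x, |l x| ^ 2 = Real.sqrt (∑ x, l x ^ 2) ^ 2 := by
    rw [Real.sq_sqrt (Finset.sum_nonneg fun _ _ => sq_nonneg _)]
    simp
  rw [h2, ← pow_add, Nat.add_sub_cancel' hn] at h
  refine (Finset.abs_sum_le_sum_abs _ _).trans ?_
  simpa only [abs_pow] using h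

open Classical in
theorem two_le_card_cycle {σ : Equiv.Perm (Fin p)} (hσ : ∀ k, σ k ≠ k)
    (q : Quotient (SameCycle.setoid σ)) :
    2 ≤ (Finset.univ.filter fun k => Quotient.mk (SameCycle.setoid σ) k = q).card := by
  obtain ⟨k, rfl⟩ := Quotient.exists_rep q
  refine Finset.one_lt_card.mpr ⟨k, by simp, σ k, ?_, (hσ k).symm⟩
  refine Finset.mem_filter.mpr ⟨Finset.mem_univ _, ?_⟩
  exact Quotient.sound (s := SameCycle.setoid σ) (SameCycle.refl σ k).apply_left

open Classical in
theorem sum_card_cycle (σ : Equiv.Perm (Fin p)) : ∑ q : Quotient (SameCycle.setoid σ),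
    (Finset.univ.filter fun k => Quotient.mk (SameCycle.setoid σ) k = q).card = p := by
  rw [← Finset.card_eq_sum_card_fiberwise (fun k _ => Finset.mem_coe.mpr (Finset.mem_univ _)),
    Finset.card_univ, Fintype.card_fin]

theorem abs_cycleSum_le (l : Fin d → ℝ) {σ : Equiv.Perm (Fin p)} (hσ : ∀ k, σ k ≠ k) :
    |cycleSum l σ| ≤ Real.sqrt (∑ x, l x ^ 2) ^ p := by
  classical
  rw [cycleSum_eq_prod, Finset.abs_prod]
  refine (Finset.prod_le_prod (fun _ _ => abs_nonneg _)
    fun q _ => abs_sum_pow_le l (two_le_card_cycle hσ q)).trans_eq ?_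
  rw [Finset.prod_pow_eq_pow_sum, sum_card_cycle]

theorem abs_cycleSum_le_of_odd (l : Fin d → ℝ) (hp : Odd p) {σ : Equiv.Perm (Fin p)}
    (hσ : ∀ k, σ k ≠ k) :
    |cycleSum l σ| ≤ (∑ x, |l x| ^ 3) * Real.sqrt (∑ x, l x ^ 2) ^ (p - 3) := by
  classical
  let n : Quotient (SameCycle.setoid σ) → ℕ := fun q =>
    (Finset.univ.filter fun k => Quotient.mk (SameCycle.setoid σ) k = q).card
  have hn2 : ∀ q, 2 ≤ n q := two_le_card_cycle hσ
  have hsum : ∑ q, n q = p := sum_card_cycle σ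
  obtain ⟨q, hq⟩ : ∃ q, Odd (n q) := by
    by_contra! h
    refine Nat.not_even_iff_odd.mpr hp ?_
    rw [← hsum]
    exact Finset.even_sum _ fun q _ => Nat.not_odd_iff_even.mp (h q)
  have hq3 : 3 ≤ n q := by
    obtain ⟨m, hm⟩ := hq
    have := hn2 q
    omega
  have hsplit : n q + ∑ r ∈ Finset.univ.erase q, n r = p := by
    rw [Finset.add_sum_erase _ _ (Finset.mem_univ q), hsum]
  rw [cycleSum_eq_prod, Finset.abs_prod, ← Finset.mul_prod_erase _ _ (Finset.mem_univ q)]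
  have h1 : |∑ x, l x ^ n q| ≤ (∑ x, |l x| ^ 3) * Real.sqrt (∑ x, l x ^ 2) ^ (n q - 3) := by
    refine (Finset.abs_sum_le_sum_abs _ _).trans ?_
    simpa only [abs_pow] using sum_abs_pow_le l hq3
  have h2 : ∏ r ∈ Finset.univ.erase q, |∑ x, l x ^ n r|
      ≤ Real.sqrt (∑ x, l x ^ 2) ^ ∑ r ∈ Finset.univ.erase q, n r := by
    rw [← Finset.prod_pow_eq_pow_sum]
    exact Finset.prod_le_prod (fun _ _ => abs_nonneg _) fun r _ => abs_sum_pow_le l (hn2 r)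
  have hexp : p - 3 = (n q - 3) + ∑ r ∈ Finset.univ.erase q, n r := by omega
  rw [hexp, pow_add, ← mul_assoc]
  exact mul_le_mul h1 h2 (Finset.prod_nonneg fun _ _ => abs_nonneg _) (by positivity)

theorem cycleSum_one_one : cycleSum (fun _ : Fin d => 1) (1 : Equiv.Perm (Fin p)) = (d : ℝ) ^ p := by
  simp [cycleSum]

theorem cycleSum_one_nonneg (σ : Equiv.Perm (Fin p)) : 0 ≤ cycleSum (fun _ : Fin d => 1) σ :=
  Finset.sum_nonneg fun _ _ => by simp

theorem cycleSum_one_decomposeFin (k : Fin (p + 1)) (e : Equiv.Perm (Fin p)) :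
    cycleSum (fun _ : Fin d => 1) (decomposeFin.symm (k, e))
      = (if k = 0 then (d : ℝ) else 1) * cycleSum (fun _ : Fin d => 1) e := by
  simp only [cycleSum, Finset.prod_const_one, Finset.sum_filter]
  rw [← (Fin.consEquiv fun _ : Fin (p + 1) => Fin d).sum_comp, Fintype.sum_prod_type_right,
    Finset.mul_sum]
  refine Finset.sum_congr rfl fun b _ => ?_
  have hiff : ∀ x : Fin d, ((Fin.cons x b : Fin (p + 1) → Fin d) ∘ decomposeFin.symm (k, e)
      = Fin.cons x b) ↔ ((Fin.cons x b : Fin (p + 1) → Fin d) k = x ∧ b ∘ e = b) := by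
    intro x
    simp only [funext_iff, Fin.forall_fin_succ, Function.comp_apply, decomposeFin_symm_apply_zero,
      decomposeFin_symm_apply_succ, Fin.cons_zero, Fin.cons_succ]
    refine and_congr_right fun h0 => forall_congr' fun m => ?_
    have : ∀ y, (Fin.cons x b : Fin (p + 1) → Fin d) (Equiv.swap 0 k y)
        = (Fin.cons x b : Fin (p + 1) → Fin d) y := by
      intro y
      rw [Equiv.swap_apply_def]
      split_ifs with h1 h2
      · rw [h1, h0, Fin.cons_zero]
      · rw [h2, h0, Fin.cons_zero]
      · rfl
    rw [this, Fin.cons_succ]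
  have hc : ∀ x : Fin d, (Fin.consEquiv fun _ : Fin (p + 1) => Fin d) (x, b)
    = (Fin.cons x b : Fin (p + 1) → Fin d) := fun _ => rfl
  simp only [hc, hiff]
  refine Fin.cases ?_ (fun k' => ?_) k
  · by_cases h : b ∘ e = b <;> simp [h]
  · by_cases h : b ∘ e = b <;> simp [h]

theorem sum_cycleSum_one (d p : ℕ) :
    ∑ σ : Equiv.Perm (Fin p), cycleSum (fun _ : Fin d => 1) σ
      = ∏ j ∈ Finset.range p, ((d : ℝ) + j) := by
  induction p with
  | zero => simp [cycleSum]
  | succ p ih =>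
    rw [Finset.prod_range_succ, ← ih, ← decomposeFin.symm.sum_comp, Fintype.sum_prod_type]
    simp only [cycleSum_one_decomposeFin, ← Finset.mul_sum]
    rw [← Finset.sum_mul, Fin.sum_univ_succ]
    simp [Fin.succ_ne_zero, mul_comm]

theorem prod_add_mul_le (d p : ℕ) (hd : 0 < d) :
    (∏ j ∈ Finset.range p, ((d : ℝ) + j)) * (1 - p * (p - 1) / (2 * d)) ≤ (d : ℝ) ^ p := by
  have hd' : (0 : ℝ) < d := by exact_mod_cast hd
  induction p with
  | zero => simp
  | succ p ih =>
    rw [Finset.prod_range_succ, pow_succ]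
    have h1 : ((d : ℝ) + p) * (1 - ((p + 1 : ℕ) : ℝ) * (((p + 1 : ℕ) : ℝ) - 1) / (2 * d))
        ≤ (1 - p * (p - 1) / (2 * d)) * d := by
      have : (1 - (p : ℝ) * (p - 1) / (2 * d)) * d
          - ((d : ℝ) + p) * (1 - ((p + 1 : ℕ) : ℝ) * (((p + 1 : ℕ) : ℝ) - 1) / (2 * d))
          = p * p * (p + 1) / (2 * d) := by
        push_cast
        field_simp
        ring
      have h2 : (0 : ℝ) ≤ p * p * (p + 1) / (2 * d) := by positivity
      linarith
    calc _ = (∏ j ∈ Finset.range p, ((d : ℝ) + j)) * (((d : ℝ) + p) *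
          (1 - ((p + 1 : ℕ) : ℝ) * (((p + 1 : ℕ) : ℝ) - 1) / (2 * d))) := by ring
      _ ≤ (∏ j ∈ Finset.range p, ((d : ℝ) + j)) * ((1 - p * (p - 1) / (2 * d)) * d) := by
        refine mul_le_mul_of_nonneg_left h1 (Finset.prod_nonneg fun _ _ => by positivity)
      _ ≤ _ := by
        rw [← mul_assoc]
        exact mul_le_mul_of_nonneg_right ih hd'.le

/-- Inversion of a diagonally dominant convolution operator on a finite group. -/
theorem norm_mul_le_of_convolution {G : Type*} [Group G] [Fintype G] {c t : G → ℂ} {N : G → ℝ}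
    (hN : ∀ g, 0 ≤ N g) {K : ℝ} (ht : ∀ g, t g = ∑ h, c h * (N (g * h) : ℂ))
    (hK : ∀ g, ‖t g‖ ≤ K) (hdom : ∑ g, N g ≤ 2 * N 1) (g : G) :
    ‖c g‖ * (2 * N 1 - ∑ g, N g) ≤ K := by
  classical
  obtain ⟨g₀, hg₀⟩ := Finite.exists_max fun g => ‖c g‖
  refine (mul_le_mul_of_nonneg_right (hg₀ g) (by linarith)).trans ?_
  have h1 : c g₀ * (N 1 : ℂ) = t g₀⁻¹ - ∑ h ∈ Finset.univ.erase g₀, c h * (N (g₀⁻¹ * h) : ℂ) := by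
    rw [ht, ← Finset.add_sum_erase _ _ (Finset.mem_univ g₀)]
    simp
  have h2 : ∑ h ∈ Finset.univ.erase g₀, N (g₀⁻¹ * h) = ∑ g, N g - N 1 := by
    rw [← Equiv.sum_comp (Equiv.mulLeft g₀⁻¹) N, ← Finset.add_sum_erase _ _ (Finset.mem_univ g₀)]
    simp
  have h3 : ‖c g₀‖ * N 1 ≤ K + ‖c g₀‖ * (∑ g, N g - N 1) := by
    rw [← h2, Finset.mul_sum]
    calc ‖c g₀‖ * N 1 = ‖c g₀ * (N 1 : ℂ)‖ := by
          rw [norm_mul, Complex.norm_real, Real.norm_of_nonneg (hN 1)]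
      _ ≤ _ := by
        rw [h1]
        refine (norm_sub_le _ _).trans (add_le_add (hK _) ((norm_sum_le _ _).trans ?_))
        refine Finset.sum_le_sum fun h _ => ?_
        rw [norm_mul, Complex.norm_real, Real.norm_of_nonneg (hN _)]
        exact mul_le_mul_of_nonneg_right (hg₀ h) (hN _)
  linarith

end CycleSums

section Counting

open Nat in
theorem fifteen_le_doubleFactorial (n : ℕ) : 15 ≤ (2 * n + 5)‼ := by
  induction n with
  | zero => decide
  | succ n ih =>
    rw [show 2 * (n + 1) + 5 = (2 * n + 5) + 2 by ring, Nat.doubleFactorial_add_two]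
    exact ih.trans (Nat.le_mul_of_pos_left _ (by omega))

theorem two_mul_sq_le_centralBinom (n : ℕ) :
    2 * (n + 6) * (n + 6) ≤ (n + 5).centralBinom := by
  induction n with
  | zero => decide
  | succ n ih =>
    have h := Nat.succ_mul_centralBinom_succ (n + 5)
    rw [show n + 5 + 1 = n + 1 + 5 by ring] at h
    generalize (n + 5).centralBinom = a at *
    generalize (n + 1 + 5).centralBinom = b at *
    have h3 : 3 * a ≤ b := by nlinarith
    nlinarith

open Nat in
theorem card_fixedPointFree_mul_le {p : ℕ} (hp : 3 ≤ p) (hpo : Odd p) :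
    ((Finset.univ.filter fun σ : Equiv.Perm (Fin p) => ∀ k, σ k ≠ k).card : ℝ) * ((p + 1) / 2)
      ≤ ((⌈(p ! : ℝ) / Real.exp 1⌉ : ℝ) - ((p - 1)‼ : ℝ)) * (catalan p : ℝ) := by
  have he := Real.exp_one_lt_three
  have hceil := Int.le_ceil ((p ! : ℝ) / Real.exp 1)
  have hlt : (p ! : ℝ) / 3 < (p ! : ℝ) / Real.exp 1 :=
    div_lt_div_of_pos_left (by exact_mod_cast p.factorial_pos) (Real.exp_pos 1) he
  rcases hp.eq_or_lt with rfl | hp4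
  · have h3 : (3 : ℤ) ≤ ⌈((3 ! : ℕ) : ℝ) / Real.exp 1⌉ := by
      have : (2 : ℤ) < ⌈((3 ! : ℕ) : ℝ) / Real.exp 1⌉ := by
        rw [Int.lt_ceil]
        refine lt_of_eq_of_lt ?_ hlt
        norm_num [Nat.factorial]
      omega
    have h3' : (3 : ℝ) ≤ (⌈((3 ! : ℕ) : ℝ) / Real.exp 1⌉ : ℝ) := by exact_mod_cast h3
    have hD : (Finset.univ.filter fun σ : Equiv.Perm (Fin 3) => ∀ k, σ k ≠ k).card = 2 := by
      decide
    rw [hD, catalan_three]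
    norm_num [Nat.doubleFactorial] at *
    linarith
  · have hp5 : 5 ≤ p := by
      obtain ⟨m, rfl⟩ := hpo
      omega
    have hD : ((Finset.univ.filter fun σ : Equiv.Perm (Fin p) => ∀ k, σ k ≠ k).card : ℝ)
        ≤ (p ! : ℝ) := by
      have := Finset.card_filter_le (Finset.univ : Finset (Equiv.Perm (Fin p)))
        (fun σ => ∀ k, σ k ≠ k)
      rw [Finset.card_univ, Fintype.card_perm, Fintype.card_fin] at this
      exact_mod_cast this
    have hdf : 15 * ((p - 1)‼ : ℝ) ≤ (p ! : ℝ) := by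
      obtain ⟨q, rfl⟩ : ∃ q, p = q + 1 := ⟨p - 1, by omega⟩
      have h15 : 15 ≤ (q + 1)‼ := by
        obtain ⟨m, hm⟩ := hpo
        rw [show q + 1 = 2 * (m - 2) + 5 by omega]
        exact fifteen_le_doubleFactorial _
      rw [Nat.factorial_eq_mul_doubleFactorial, Nat.add_sub_cancel]
      exact_mod_cast Nat.mul_le_mul_right _ h15
    have hcat : 2 * ((p : ℝ) + 1) ≤ (catalan p : ℝ) := by
      have h1 := two_mul_sq_le_centralBinom (p - 5)
      rw [show p - 5 + 6 = p + 1 by omega, show p - 5 + 5 = p by omega] at h1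
      rw [catalan_eq_centralBinom_div]
      have : 2 * (p + 1) ≤ p.centralBinom / (p + 1) := (Nat.le_div_iff_mul_le (by omega)).mpr h1
      exact_mod_cast this
    have hpos : (0 : ℝ) < (p ! : ℝ) := by exact_mod_cast p.factorial_pos
    have hp0 : (0 : ℝ) ≤ p := Nat.cast_nonneg p
    have h4 : (p ! : ℝ) * (4 / 15) ≤ (⌈(p ! : ℝ) / Real.exp 1⌉ : ℝ) - ((p - 1)‼ : ℝ) := by
      linarith
    calc _ ≤ (p ! : ℝ) * ((p + 1) / 2) := by gcongr
      _ ≤ (p ! : ℝ) * (4 / 15) * (2 * ((p : ℝ) + 1)) := by nlinarith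
      _ ≤ _ := mul_le_mul h4 hcat (by positivity) (le_trans (by positivity) h4)

end Counting

section CentralMoments

variable {d p : ℕ}

theorem Matrix.IsHermitian.eq_mul_diagonal_mul {A : Matrix (Fin d) (Fin d) ℂ}
    (hA : A.IsHermitian) :
    A = (hA.eigenvectorUnitary : Matrix (Fin d) (Fin d) ℂ)
      * diagonal (fun x => (hA.eigenvalues x : ℂ)) * star (hA.eigenvectorUnitary : Matrix _ _ ℂ) := by
  conv_lhs => rw [hA.spectral_theorem, Unitary.conjStarAlgAut_apply]
  rfl

theorem Matrix.IsHermitian.trace_sq_re {A : Matrix (Fin d) (Fin d) ℂ} (hA : A.IsHermitian) :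
    (A ^ 2).trace.re = ∑ x, hA.eigenvalues x ^ 2 := by
  have hW : star (hA.eigenvectorUnitary : Matrix (Fin d) (Fin d) ℂ)
      * (hA.eigenvectorUnitary : Matrix (Fin d) (Fin d) ℂ) = 1 :=
    Unitary.coe_star_mul_self _
  have h : (A ^ 2).trace = ((∑ x, hA.eigenvalues x ^ 2 : ℝ) : ℂ) := by
    conv_lhs => rw [hA.eq_mul_diagonal_mul]
    generalize (hA.eigenvectorUnitary : Matrix (Fin d) (Fin d) ℂ) = W at hW
    rw [pow_two, show ∀ D : Matrix (Fin d) (Fin d) ℂ,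
      W * D * star W * (W * D * star W) = W * D * (star W * W) * D * star W from
      fun D => by simp only [Matrix.mul_assoc], hW, Matrix.mul_one, Matrix.mul_assoc,
      Matrix.mul_assoc, Matrix.trace_mul_comm, Matrix.mul_assoc, Matrix.mul_assoc, hW,
      Matrix.mul_one, diagonal_mul_diagonal, trace_diagonal]
    push_cast
    simp only [pow_two]
  rw [h, Complex.ofReal_re]

theorem Matrix.IsHermitian.sum_eigenvalues_eq_zero {A : Matrix (Fin d) (Fin d) ℂ}
    (hA : A.IsHermitian) (h0 : A.trace = 0) : ∑ x, hA.eigenvalues x = 0 := by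
  have h := hA.trace_eq_sum_eigenvalues
  rw [h0] at h
  exact Complex.ofReal_eq_zero.mp ((Complex.ofReal_sum _ _).trans h.symm)

theorem Matrix.IsHermitian.sum_eigenvalues_sq_pos {A : Matrix (Fin d) (Fin d) ℂ}
    (hA : A.IsHermitian) (h0 : A ≠ 0) : 0 < ∑ x, hA.eigenvalues x ^ 2 := by
  refine (Finset.sum_nonneg fun _ _ => sq_nonneg _).lt_of_ne fun h => h0 ?_
  rw [← hA.eigenvalues_eq_zero_iff]
  funext x
  have := (Finset.sum_eq_zero_iff_of_nonneg fun _ _ => sq_nonneg _).mp h.symm x (Finset.mem_univ x)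
  exact pow_eq_zero_iff (two_ne_zero) |>.mp this

theorem prod_add_mul_succ_le (hp : 1 ≤ p) (hpd : p ^ 2 ≤ d) :
    (∏ j ∈ Finset.range p, ((d : ℝ) + j)) * (p + 1) ≤ 2 * p * (d : ℝ) ^ p := by
  have hd : 0 < d := lt_of_lt_of_le (by positivity) hpd
  have hd' : (0 : ℝ) < d := by exact_mod_cast hd
  have hp' : (1 : ℝ) ≤ p := by exact_mod_cast hp
  have hpd' : (p : ℝ) ^ 2 ≤ d := by exact_mod_cast hpd
  have h := prod_add_mul_le d p hd
  have hx : ((p : ℝ) + 1) / (2 * p) ≤ 1 - p * (p - 1) / (2 * d) := by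
    rw [← sub_nonneg, show 1 - (p : ℝ) * (p - 1) / (2 * d) - (p + 1) / (2 * p)
      = (p - 1) * (d - p ^ 2) / (2 * p * d) by field_simp; ring]
    exact div_nonneg (mul_nonneg (by linarith) (by linarith)) (by positivity)
  have hR : 0 ≤ ∏ j ∈ Finset.range p, ((d : ℝ) + j) := Finset.prod_nonneg fun _ _ => by positivity
  have h2 := (mul_le_mul_of_nonneg_left hx hR).trans h
  rw [← mul_div_assoc, div_le_iff₀ (by positivity)] at h2
  linarith

theorem norm_entryMoment_le (hp : 2 ≤ p) (hpd : p ^ 2 ≤ d)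
    (μ : Measure (Matrix.unitaryGroup (Fin d) ℂ)) [μ.IsHaarMeasure] [IsProbabilityMeasure μ]
    {B : Matrix (Fin d) (Fin d) ℂ} (hB : B.IsHermitian) (hB0 : B.trace = 0)
    {ι : Fin p → Fin d} (hι : Function.Injective ι) (σ : Equiv.Perm (Fin p)) :
    ‖entryMoment μ B (ι ∘ σ) ι‖
      ≤ (p + 1) / 2 * (Real.sqrt (∑ x, hB.eigenvalues x ^ 2) / d) ^ p := by
  have hd : (0 : ℝ) < d := by exact_mod_cast lt_of_lt_of_le (by positivity) hpd
  have hp' : (0 : ℝ) < p := by exact_mod_cast (by omega : 0 < p)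
  have hR := prod_add_mul_succ_le (by omega : 1 ≤ p) hpd
  have hD : 0 < (d : ℝ) ^ p := by positivity
  have hc := norm_mul_le_of_convolution (c := fun σ : Equiv.Perm (Fin p) => entryMoment μ B (ι ∘ σ) ι)
    (t := fun τ => (cycleSum hB.eigenvalues τ : ℂ))
    (N := fun τ : Equiv.Perm (Fin p) => cycleSum (fun _ : Fin d => 1) τ)
    (K := Real.sqrt (∑ x, hB.eigenvalues x ^ 2) ^ p) cycleSum_one_nonneg
    (fun τ => cycleSum_eq_sum_entryMoment (by nlinarith) μ (Unitary.coe_star_mul_self _)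
      hB.eq_mul_diagonal_mul hι τ) (fun τ => ?_) ?_ σ
  · rw [cycleSum_one_one, sum_cycleSum_one] at hc
    rw [div_pow, ← mul_div_assoc, le_div_iff₀ hD]
    have := norm_nonneg (entryMoment μ B (ι ∘ σ) ι)
    generalize ‖entryMoment μ B (ι ∘ σ) ι‖ = c at *
    generalize ∏ j ∈ Finset.range p, ((d : ℝ) + j) = R at *
    have h1 := mul_le_mul_of_nonneg_right hc (by positivity : (0 : ℝ) ≤ p + 1)
    have h2 := mul_le_mul_of_nonneg_left hR this
    linarith
  · rw [Complex.norm_real, Real.norm_eq_abs]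
    by_cases h : ∀ k, τ k ≠ k
    · exact abs_cycleSum_le _ h
    · push Not at h
      obtain ⟨k, hk⟩ := h
      rw [cycleSum_eq_zero (hB.sum_eigenvalues_eq_zero hB0) hk, abs_zero]
      positivity
  · rw [cycleSum_one_one, sum_cycleSum_one]
    refine le_of_mul_le_mul_right (hR.trans ?_) (by positivity : (0 : ℝ) < p + 1)
    linarith

theorem norm_integral_trace_pow_le (hp : 2 ≤ p) (hpo : Odd p) (hpd : p ^ 2 ≤ d)
    (μ : Measure (Matrix.unitaryGroup (Fin d) ℂ)) [μ.IsHaarMeasure] [IsProbabilityMeasure μ]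
    {A B : Matrix (Fin d) (Fin d) ℂ} (hA : A.IsHermitian) (hA0 : A.trace = 0)
    (hB : B.IsHermitian) (hB0 : B.trace = 0) :
    ‖∫ U : Matrix.unitaryGroup (Fin d) ℂ, ((U : Matrix (Fin d) (Fin d) ℂ) * B
        * star (U : Matrix (Fin d) (Fin d) ℂ) * A).trace ^ p ∂μ‖
      ≤ (Finset.univ.filter fun σ : Equiv.Perm (Fin p) => ∀ k, σ k ≠ k).card
        * (((p + 1) / 2 * (Real.sqrt (∑ x, hB.eigenvalues x ^ 2) / d) ^ p)
          * ((∑ x, |hA.eigenvalues x| ^ 3)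
            * Real.sqrt (∑ x, hA.eigenvalues x ^ 2) ^ (p - 3))) := by
  have hle : p ≤ d := by nlinarith
  have hι := Fin.castLE_injective hle
  rw [integral_trace_pow_eq (by nlinarith) μ A B hι, ← nsmul_eq_mul, ← Finset.sum_const,
    Finset.sum_filter]
  refine norm_sum_le_of_le _ fun σ _ => ?_
  have hσA : permTrace A σ = (cycleSum hA.eigenvalues σ : ℂ) := by
    conv_lhs => rw [hA.eq_mul_diagonal_mul]
    exact permTrace_eq_cycleSum (Unitary.coe_star_mul_self _) _ σ
  rw [hσA]
  split_ifs with h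
  · rw [norm_mul, Complex.norm_real, Real.norm_eq_abs]
    exact mul_le_mul (norm_entryMoment_le hp hpd μ hB hB0 hι σ) (abs_cycleSum_le_of_odd _ hpo h)
      (abs_nonneg _) (by positivity)
  · push Not at h
    obtain ⟨k, hk⟩ := h
    rw [cycleSum_eq_zero (hA.sum_eigenvalues_eq_zero hA0) hk]
    simp

theorem Matrix.trace_sub_trace_div_smul_one (hd : d ≠ 0)
    (A : Matrix (Fin d) (Fin d) ℂ) :
    (A - (A.trace / (d : ℂ)) • (1 : Matrix (Fin d) (Fin d) ℂ)).trace = 0 := by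
  have : (d : ℂ) ≠ 0 := by exact_mod_cast hd
  rw [trace_sub, trace_smul, trace_one, Fintype.card_fin, smul_eq_mul, div_mul_cancel₀ _ this,
    sub_self]

theorem trace_conj_mul_eq (hd : d ≠ 0) {H ρ : Matrix (Fin d) (Fin d) ℂ} (hH : H.IsHermitian)
    (hρ : ρ.IsHermitian) (hρtr : ρ.trace = 1) {U : Matrix (Fin d) (Fin d) ℂ}
    (hU : U * star U = 1) (hU' : star U * U = 1) :
    (U * (ρ - ((d : ℂ))⁻¹ • 1) * star U * (H - (H.trace / (d : ℂ)) • 1)).trace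
      = (((U * ρ * star U * H).trace.re - H.trace.re / d : ℝ) : ℂ) := by
  have hdc : (d : ℂ) ≠ 0 := by exact_mod_cast hd
  have h1 : (U * ρ * star U).trace = 1 := by
    rw [trace_mul_comm, ← Matrix.mul_assoc, hU', Matrix.one_mul, hρtr]
  have hreal : ∀ z : ℂ, star z = z → ((z.re : ℝ) : ℂ) = z := fun z hz =>
    Complex.conj_eq_iff_re.mp hz
  have hHre : ((H.trace.re : ℝ) : ℂ) = H.trace := hreal _ <| by
    rw [← trace_conjTranspose, hH.eq]
  have hre : (((U * ρ * star U * H).trace.re : ℝ) : ℂ) = (U * ρ * star U * H).trace := hreal _ <| by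
    rw [← trace_conjTranspose, conjTranspose_mul, conjTranspose_mul, conjTranspose_mul, hH.eq,
      hρ.eq, star_eq_conjTranspose, conjTranspose_conjTranspose, trace_mul_comm,
      Matrix.mul_assoc U, Matrix.mul_assoc U, Matrix.mul_assoc U]
  push_cast
  rw [hre, hHre]
  simp only [Matrix.mul_sub, Matrix.sub_mul, Matrix.mul_smul, Matrix.smul_mul, Matrix.mul_one,
    Matrix.one_mul, hU, trace_sub, trace_smul, trace_one, h1, Fintype.card_fin]
  simp only [smul_eq_mul]
  field_simp
  ring

end CentralMoments

theorem moment_bound_arith {n p d : ℕ} {c f k S T S2 L : ℝ} (hp : 3 ≤ p) (hd : 2 ≤ d)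
    (hS : 0 < S) (hT : 0 ≤ T) (hL : 0 ≤ L) (hS2 : S2 = S * T / ((d : ℝ) ^ 2 - 1))
    (hn : (n : ℝ) * ((p + 1) / 2) ≤ (c - f) * k) :
    n * (((p + 1) / 2 * (Real.sqrt T / d) ^ p) * (L * Real.sqrt S ^ (p - 3)))
      ≤ (c - f) * k * S2 ^ ((p : ℝ) / 2) * Real.sqrt (L ^ 2 / S ^ 3) := by
  have hd' : (2 : ℝ) ≤ d := by exact_mod_cast hd
  have hd1 : 0 < (d : ℝ) ^ 2 - 1 := by nlinarith
  have hs : 0 < Real.sqrt S := Real.sqrt_pos.mpr hS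
  have hS20 : 0 ≤ S2 := hS2 ▸ by positivity
  have hη : Real.sqrt (L ^ 2 / S ^ 3) = L / Real.sqrt S ^ 3 := by
    have h3 : S ^ 3 = (Real.sqrt S ^ 3) ^ 2 := by
      rw [← pow_mul, mul_comm, pow_mul, Real.sq_sqrt hS.le]
    rw [h3, ← div_pow, Real.sqrt_sq (by positivity)]
  have hst : Real.sqrt S * Real.sqrt T / d ≤ Real.sqrt S2 := by
    refine Real.le_sqrt_of_sq_le ?_
    rw [div_pow, mul_pow, Real.sq_sqrt hS.le, Real.sq_sqrt hT, hS2]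
    gcongr
    linarith
  rw [Real.rpow_div_two_eq_sqrt _ hS20, Real.rpow_natCast, hη]
  calc n * (((p + 1) / 2 * (Real.sqrt T / d) ^ p) * (L * Real.sqrt S ^ (p - 3)))
      = n * ((p + 1) / 2) * (Real.sqrt S * Real.sqrt T / d) ^ p * (L / Real.sqrt S ^ 3) := by
        rw [pow_sub₀ _ hs.ne' hp]
        ring
    _ ≤ _ := by
        refine mul_le_mul_of_nonneg_right (mul_le_mul hn ?_ (by positivity) ?_) (by positivity)
        · exact pow_le_pow_left₀ (by positivity) hst p
        · exact le_trans (by positivity) hn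

/-- **Statement 13.** General-state odd central moments are small: for odd `p` with `3 ≤ p`,
`p² ≤ d` and `6p^{7/2} < d²`,
`|Σ^(p)| ≤ G_p·√η_{ΔH}·(1 − 6p^{7/2}/d²)⁻¹·(⌈p!/e⌉/(p−1)!! − 1)·Cat_p·(1 + p²/d)`. -/
theorem odd_moment_bound (d : ℕ) (hd : 2 ≤ d)
    (μ : Measure (Matrix.unitaryGroup (Fin d) ℂ))
    [μ.IsHaarMeasure] [IsProbabilityMeasure μ]
    (H ρ : Matrix (Fin d) (Fin d) ℂ) (hH : H.IsHermitian)
    (hρ : ρ.PosSemidef) (hρtr : ρ.trace = 1)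
    (hΔH : (H - (H.trace / (d : ℂ)) • (1 : Matrix (Fin d) (Fin d) ℂ)).IsHermitian)
    (hΔHne : H - (H.trace / (d : ℂ)) • (1 : Matrix (Fin d) (Fin d) ℂ) ≠ 0)
    (hΔρne : ρ - ((d : ℂ))⁻¹ • (1 : Matrix (Fin d) (Fin d) ℂ) ≠ 0)
    (p : ℕ) (hp : 3 ≤ p) (hpo : Odd p)
    (hpd : p ^ 2 ≤ d) (hpd' : 6 * (p : ℝ) ^ ((7 : ℝ) / 2) < (d : ℝ) ^ 2)
    (Sp S2 Gp : ℝ)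
    (hSp : Sp = ∫ U : Matrix.unitaryGroup (Fin d) ℂ,
        (((U : Matrix (Fin d) (Fin d) ℂ) * ρ
            * star (U : Matrix (Fin d) (Fin d) ℂ) * H).trace.re - H.trace.re / d) ^ p ∂μ)
    (hS2 : S2 = (((H - (H.trace / (d : ℂ)) • 1) ^ 2).trace.re
        * ((ρ - ((d : ℂ))⁻¹ • 1) ^ 2).trace.re) / ((d : ℝ) ^ 2 - 1))
    (hGp : Gp = (Nat.doubleFactorial (p - 1) : ℝ) * S2 ^ ((p : ℝ) / 2)) :
    |Sp| ≤ Gp * Real.sqrt (eta hΔH)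
        * (1 - 6 * (p : ℝ) ^ ((7 : ℝ) / 2) / (d : ℝ) ^ 2)⁻¹
        * ((⌈(p.factorial : ℝ) / Real.exp 1⌉ : ℝ)
            / (Nat.doubleFactorial (p - 1) : ℝ) - 1)
        * (catalan p : ℝ) * (1 + (p : ℝ) ^ 2 / d) := by
  have hd0 : d ≠ 0 := by omega
  have hB : (ρ - ((d : ℂ))⁻¹ • (1 : Matrix (Fin d) (Fin d) ℂ)).IsHermitian := by
    refine hρ.isHermitian.sub ?_
    rw [IsHermitian, conjTranspose_smul, conjTranspose_one, star_inv₀, star_natCast]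
  have hB0 : (ρ - ((d : ℂ))⁻¹ • (1 : Matrix (Fin d) (Fin d) ℂ)).trace = 0 := by
    simpa [hρtr] using trace_sub_trace_div_smul_one hd0 ρ
  have hSp_eq : (Sp : ℂ) = ∫ U : Matrix.unitaryGroup (Fin d) ℂ, ((U : Matrix (Fin d) (Fin d) ℂ)
      * (ρ - ((d : ℂ))⁻¹ • 1) * star (U : Matrix (Fin d) (Fin d) ℂ)
      * (H - (H.trace / (d : ℂ)) • 1)).trace ^ p ∂μ := by
    rw [hSp, ← integral_complex_ofReal]
    refine integral_congr_ae (Filter.Eventually.of_forall fun U => ?_)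
    dsimp only
    rw [trace_conj_mul_eq hd0 hH hρ.isHermitian hρtr (Unitary.coe_mul_star_self U)
      (Unitary.coe_star_mul_self U), Complex.ofReal_pow]
  have hSp_le := norm_integral_trace_pow_le (by omega) hpo hpd μ hΔH
    (trace_sub_trace_div_smul_one hd0 H) hB hB0
  rw [← hSp_eq, Complex.norm_real, Real.norm_eq_abs] at hSp_le
  rw [hΔH.trace_sq_re, hB.trace_sq_re] at hS2
  have harith := hSp_le.trans (moment_bound_arith hp hd (hΔH.sum_eigenvalues_sq_pos hΔHne)
    (Finset.sum_nonneg fun _ _ => sq_nonneg _) (Finset.sum_nonneg fun _ _ => by positivity) hS2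
    (card_fixedPointFree_mul_le hp hpo))
  have hf : (Nat.doubleFactorial (p - 1) : ℝ) ≠ 0 := by
    exact_mod_cast (Nat.doubleFactorial_pos _).ne'
  have hx : 6 * (p : ℝ) ^ ((7 : ℝ) / 2) / (d : ℝ) ^ 2 < 1 := by
    rwa [div_lt_one (by positivity)]
  have hinv : 1 ≤ (1 - 6 * (p : ℝ) ^ ((7 : ℝ) / 2) / (d : ℝ) ^ 2)⁻¹ :=
    (one_le_inv₀ (by linarith)).mpr (sub_le_self _ (by positivity))
  have hlast : 1 ≤ 1 + (p : ℝ) ^ 2 / d := le_add_of_nonneg_right (by positivity)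
  refine harith.trans ?_
  have h0 := (abs_nonneg Sp).trans harith
  rw [hGp, eta]
  refine (le_mul_of_one_le_right h0 (one_le_mul_of_one_le_of_one_le hinv hlast)).trans_eq ?_
  field_simp
end
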